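/- Fix an integer d ≥ 3 and a real p with 1/(d-1) < p < 1. For every ε, b > 0 there exist R and c > 0 such that: if 𝒢 is a regular (b,d)-expander on n vertices with girth greater than 2R, and G ∼ 𝒢_p, then the probability that the symmetric difference E₂(G) △ E(C₁^{(2)}(G)) has more than εn elements is at most exp(−c n), and the probability that the symmetric difference V₂(G) △ V(C₁^{(2)}(G)) has more than εn elements is at most exp(−c n), where C₁^{(2)}(G) is the 2-core of a largest connected component of G. -/

import Mathlib

open scoped Classical symmDiff

noncomputable section

namespace Percolation

variable {V : Type} [Fintype V] [DecidableEq V]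

/-- The edge set of `G` as a finset. -/
noncomputable def edgeFinset' (G : SimpleGraph V) : Finset (Sym2 V) :=
  Finset.univ.filter (· ∈ G.edgeSet)

/-- Probability that bond percolation on `G` with parameter `p` produces a spanning
subgraph satisfying `P`. -/
noncomputable def percProb (G : SimpleGraph V) (p : ℝ) (P : SimpleGraph V → Prop) : ℝ :=
  ∑ s ∈ (edgeFinset' G).powerset,
    (p ^ s.card * (1 - p) ^ ((edgeFinset' G).card - s.card)) *
      (if P (SimpleGraph.fromEdgeSet (↑s)) then 1 else 0)

/-- Joint probability for two independent bond percolations on `G`. -/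
noncomputable def percProb2 (G : SimpleGraph V) (p₁ p₂ : ℝ)
    (P : SimpleGraph V → SimpleGraph V → Prop) : ℝ :=
  ∑ s ∈ (edgeFinset' G).powerset, ∑ t ∈ (edgeFinset' G).powerset,
    (p₁ ^ s.card * (1 - p₁) ^ ((edgeFinset' G).card - s.card)) *
    (p₂ ^ t.card * (1 - p₂) ^ ((edgeFinset' G).card - t.card)) *
      (if P (SimpleGraph.fromEdgeSet (↑s)) (SimpleGraph.fromEdgeSet (↑t)) then 1 else 0)

/-- Number of edges of `G` joining `S` to its complement. -/
noncomputable def cutCard (G : SimpleGraph V) (S : Finset V) : ℕ :=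
  ((edgeFinset' G).filter (fun e => ∃ x ∈ S, ∃ y, y ∉ S ∧ e = s(x, y))).card

/-- `G` is a `(b,d)`-expander: max degree at most `d`, and every vertex set of size at most
`n/2` has at least `b|S|` edges to its complement. -/
def IsExpander (G : SimpleGraph V) (b : ℝ) (d : ℕ) : Prop :=
  (∀ v, (G.neighborSet v).ncard ≤ d) ∧
  ∀ S : Finset V, (S.card : ℝ) ≤ Fintype.card V / 2 → b * S.card ≤ cutCard G S

/-- `G` is a regular `(b,d)`-expander. -/
def IsRegularExpander (G : SimpleGraph V) (b : ℝ) (d : ℕ) : Prop :=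
  IsExpander G b d ∧ ∀ v, (G.neighborSet v).ncard = d

/-- The vertices of the connected component `c` of `G`. -/
noncomputable def compVerts (G : SimpleGraph V) (c : G.ConnectedComponent) : Finset V :=
  Finset.univ.filter (fun v => G.connectedComponentMk v = c)

/-- The edges of the connected component `c` of `G`. -/
noncomputable def compEdges (G : SimpleGraph V) (c : G.ConnectedComponent) : Finset (Sym2 V) :=
  (edgeFinset' G).filter (fun e => ∀ v ∈ e, G.connectedComponentMk v = c)

/-- `c` is a largest connected component of `G`. -/
def IsLargestComp (G : SimpleGraph V) (c : G.ConnectedComponent) : Prop :=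
  ∀ c' : G.ConnectedComponent, (compVerts G c').card ≤ (compVerts G c).card

/-- The 2-core of the connected component `c` of `G` : the maximal subgraph of `G`
supported inside `c` all of whose vertices have degree at least 2. -/
noncomputable def twoCoreComp (G : SimpleGraph V) (c : G.ConnectedComponent) : SimpleGraph V :=
  sSup {H : SimpleGraph V | H ≤ G ∧ (∀ v ∈ H.support, G.connectedComponentMk v = c) ∧
    ∀ v ∈ H.support, 2 ≤ (H.neighborSet v).ncard}

/-- The event `A^R_{x,y}(H)`: the connected component of `y` in `H` with the edge `xy`
removed (if present) has at least `R` vertices. -/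
def eventA (H : SimpleGraph V) (R : ℕ) (x y : V) : Prop :=
  R ≤ (compVerts (H.deleteEdges {s(x, y)})
        ((H.deleteEdges {s(x, y)}).connectedComponentMk y)).card

/-- `E₁(H)`: edges `xy` of `H` such that `A^R_{x,y}` or `A^R_{y,x}` holds. -/
noncomputable def E1set (H : SimpleGraph V) (R : ℕ) : Finset (Sym2 V) :=
  (edgeFinset' H).filter (fun e => ∃ x y, e = s(x, y) ∧ (eventA H R x y ∨ eventA H R y x))

/-- `V₁(H)`: vertices `x` such that for some `y`, `xy ∈ E(H)` and `A^R_{x,y}` holds. -/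
noncomputable def V1set (H : SimpleGraph V) (R : ℕ) : Finset V :=
  Finset.univ.filter (fun x => ∃ y, H.Adj x y ∧ eventA H R x y)

/-- `E₂(H)`: edges `xy` of `H` such that both `A^R_{x,y}` and `A^R_{y,x}` hold. -/
noncomputable def E2set (H : SimpleGraph V) (R : ℕ) : Finset (Sym2 V) :=
  (edgeFinset' H).filter (fun e => ∃ x y, e = s(x, y) ∧ eventA H R x y ∧ eventA H R y x)

/-- `V₂(H)`: vertices incident to an edge of `E₂(H)`. -/
noncomputable def V2set (H : SimpleGraph V) (R : ℕ) : Finset V :=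
  Finset.univ.filter (fun x => ∃ e ∈ E2set H R, x ∈ e)

/-- `V̄₁(H)`: vertices `y` such that `A^R_{x,y}(H)` holds for some `x`. -/
noncomputable def Vbar1 (H : SimpleGraph V) (R : ℕ) : Finset V :=
  Finset.univ.filter (fun y => ∃ x, eventA H R x y)

/-- `S` is `k`-thick in `H`: a union of pairwise disjoint subsets, each of size at least
`k`, each inducing a connected subgraph of `H`. -/
def IsThick (H : SimpleGraph V) (k : ℕ) (S : Finset V) : Prop :=
  ∃ P : Finset (Finset V),
    (∀ T ∈ P, k ≤ T.card ∧ (H.induce (↑T : Set V)).Connected) ∧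
    (↑P : Set (Finset V)).PairwiseDisjoint id ∧ S = P.biUnion id

/-- `S` is a separator of `K`. -/
def IsSeparator {W : Type} [Fintype W] (K : SimpleGraph W) (S : Finset W) : Prop :=
  ∃ A B : Finset W, Disjoint A B ∧ Disjoint A S ∧ Disjoint B S ∧
    (∀ w, w ∈ A ∨ w ∈ B ∨ w ∈ S) ∧
    (∀ a ∈ A, ∀ b ∈ B, ¬ K.Adj a b) ∧
    3 * A.card ≤ 2 * Fintype.card W ∧ 3 * B.card ≤ 2 * Fintype.card W

theorem exp_le_add_exp_sq (x : ℝ) : Real.exp x ≤ x + Real.exp (x ^ 2) := by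
  have h1 := Real.add_one_le_exp (x ^ 2)
  rcases le_or_gt |x| 1 with h | h
  · have := (abs_le.1 (Real.abs_exp_sub_one_sub_id_le h)).2
    linarith
  · rcases lt_abs.1 h with h | h
    · have : Real.exp x ≤ Real.exp (x ^ 2) := Real.exp_le_exp.2 (by nlinarith)
      linarith
    · have : Real.exp x ≤ 1 := Real.exp_le_one_iff.2 (by linarith)
      nlinarith

section RandomSubset

variable {α : Type*}

/-- Expectation of `f` at the random subset of `E` retaining each element independently with
probability `p`. -/
def expect (E : Finset α) (p : ℝ) (f : Finset α → ℝ) : ℝ :=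
  ∑ s ∈ E.powerset, (p ^ s.card * (1 - p) ^ (E.card - s.card)) * f s

/-- Probability that the random subset of `E` retaining each element independently with
probability `p` satisfies `P`. -/
def prob (E : Finset α) (p : ℝ) (P : Finset α → Prop) : ℝ :=
  expect E p (fun s => if P s then 1 else 0)

theorem expect_empty (p : ℝ) (f : Finset α → ℝ) : expect ∅ p f = f ∅ := by
  simp [expect]

theorem expect_add (E : Finset α) (p : ℝ) (f g : Finset α → ℝ) :
    expect E p (fun s => f s + g s) = expect E p f + expect E p g := by
  simp [expect, mul_add, Finset.sum_add_distrib]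

theorem expect_const_mul (E : Finset α) (p c : ℝ) (f : Finset α → ℝ) :
    expect E p (fun s => c * f s) = c * expect E p f := by
  simp only [expect, Finset.mul_sum]
  exact Finset.sum_congr rfl fun s _ => by ring

theorem expect_sub (E : Finset α) (p : ℝ) (f g : Finset α → ℝ) :
    expect E p (fun s => f s - g s) = expect E p f - expect E p g := by
  simp [expect, mul_sub, Finset.sum_sub_distrib]

theorem expect_sum {ι : Type*} (E : Finset α) (p : ℝ) (I : Finset ι) (f : ι → Finset α → ℝ) :
    expect E p (fun s => ∑ i ∈ I, f i s) = ∑ i ∈ I, expect E p (f i) := by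
  simp only [expect, Finset.mul_sum]
  exact Finset.sum_comm

theorem expect_mono {E : Finset α} {p : ℝ} (h0 : 0 ≤ p) (h1 : p ≤ 1) {f g : Finset α → ℝ}
    (h : ∀ s ⊆ E, f s ≤ g s) : expect E p f ≤ expect E p g := by
  refine Finset.sum_le_sum fun s hs => mul_le_mul_of_nonneg_left (h s (Finset.mem_powerset.1 hs)) ?_
  have : 0 ≤ 1 - p := by linarith
  positivity

theorem expect_congr {E : Finset α} {p : ℝ} {f g : Finset α → ℝ}
    (h : ∀ s ⊆ E, f s = g s) : expect E p f = expect E p g :=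
  Finset.sum_congr rfl fun s hs => by rw [h s (Finset.mem_powerset.1 hs)]

theorem prob_mono {E : Finset α} {p : ℝ} (h0 : 0 ≤ p) (h1 : p ≤ 1) {P Q : Finset α → Prop}
    (h : ∀ s ⊆ E, P s → Q s) : prob E p P ≤ prob E p Q := by
  refine expect_mono h0 h1 fun s hs => ?_
  by_cases hP : P s
  · rw [if_pos hP, if_pos (h s hs hP)]
  · rw [if_neg hP]; split_ifs <;> norm_num

theorem prob_exists_le {ι : Type*} {E : Finset α} {p : ℝ} (h0 : 0 ≤ p) (h1 : p ≤ 1)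
    (I : Finset ι) (P : ι → Finset α → Prop) :
    prob E p (fun s => ∃ i ∈ I, P i s) ≤ ∑ i ∈ I, prob E p (P i) := by
  unfold prob
  rw [← expect_sum]
  refine expect_mono h0 h1 fun s hs => ?_
  have hnn : ∀ i ∈ I, (0 : ℝ) ≤ if P i s then 1 else 0 := fun i _ => by split_ifs <;> norm_num
  by_cases h : ∃ i ∈ I, P i s
  · obtain ⟨i, hi, hPi⟩ := h
    rw [if_pos ⟨i, hi, hPi⟩]
    refine le_trans ?_ (Finset.single_le_sum hnn hi)
    rw [if_pos hPi]
  · rw [if_neg h]; exact Finset.sum_nonneg hnn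

variable [DecidableEq α]

theorem expect_insert {a : α} {E : Finset α} (ha : a ∉ E) (p : ℝ) (f : Finset α → ℝ) :
    expect (insert a E) p f =
      p * expect E p (fun s => f (insert a s)) + (1 - p) * expect E p f := by
  unfold expect
  rw [Finset.sum_powerset_insert ha, add_comm, Finset.mul_sum, Finset.mul_sum]
  congr 1
  · refine Finset.sum_congr rfl fun s hs => ?_
    have hs' := Finset.mem_powerset.1 hs
    rw [Finset.card_insert_of_notMem (fun h => ha (hs' h)), Finset.card_insert_of_notMem ha,
      Nat.add_sub_add_right, pow_succ]
    ring
  · refine Finset.sum_congr rfl fun s hs => ?_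
    have hs' := Finset.card_le_card (Finset.mem_powerset.1 hs)
    rw [Finset.card_insert_of_notMem ha, Nat.succ_sub hs', pow_succ]
    ring

theorem expect_const (E : Finset α) (p c : ℝ) : expect E p (fun _ => c) = c := by
  induction E using Finset.induction_on with
  | empty => simp [expect_empty]
  | insert a E ha ih => rw [expect_insert ha, ih]; ring

theorem expect_union (E : Finset α) (p q : ℝ) (f : Finset α → ℝ) :
    expect E (p + q - p * q) f = expect E p (fun s => expect E q (fun t => f (s ∪ t))) := by
  induction E using Finset.induction_on generalizing f with
  | empty => simp [expect_empty]
  | insert a E ha ih =>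
    simp only [expect_insert ha, ih, expect_add, expect_const_mul, Finset.insert_union,
      Finset.union_insert, Finset.insert_idem]
    ring

theorem expect_mul_of_disjoint (E : Finset α) (p : ℝ) {f g : Finset α → ℝ} {A B : Finset α}
    (hAB : Disjoint A B) (hf : ∀ s, ∀ a ∉ A, f (insert a s) = f s)
    (hg : ∀ s, ∀ a ∉ B, g (insert a s) = g s) :
    expect E p (fun s => f s * g s) = expect E p f * expect E p g := by
  induction E using Finset.induction_on generalizing f g with
  | empty => simp [expect_empty]
  | insert a E ha ih =>
    have hf' : ∀ s, ∀ x ∉ A, f (insert a (insert x s)) = f (insert a s) := fun s x hx => by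
      rw [Finset.insert_comm, hf _ x hx]
    have hg' : ∀ s, ∀ x ∉ B, g (insert a (insert x s)) = g (insert a s) := fun s x hx => by
      rw [Finset.insert_comm, hg _ x hx]
    rw [expect_insert ha, expect_insert ha, expect_insert ha, ih hf hg,
      ih (f := fun s => f (insert a s)) (g := fun s => g (insert a s)) hf' hg']
    by_cases haA : a ∈ A
    · have haB : a ∉ B := Finset.disjoint_left.1 hAB haA
      simp only [hg _ a haB]
      ring
    · simp only [hf _ a haA]
      ring

theorem expect_prod_of_disjoint {ι : Type*} [DecidableEq ι] (E : Finset α) (p : ℝ) (I : Finset ι)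
    {f : ι → Finset α → ℝ} {A : ι → Finset α}
    (hA : ∀ i ∈ I, ∀ j ∈ I, i ≠ j → Disjoint (A i) (A j))
    (hf : ∀ i ∈ I, ∀ s, ∀ a ∉ A i, f i (insert a s) = f i s) :
    expect E p (fun s => ∏ i ∈ I, f i s) = ∏ i ∈ I, expect E p (f i) := by
  induction I using Finset.induction_on with
  | empty => simp [expect_const]
  | insert i I hi ih =>
    simp only [Finset.prod_insert hi]
    rw [expect_mul_of_disjoint E p (f := f i) (g := fun s => ∏ j ∈ I, f j s) (A := A i)
      (B := I.biUnion A), ih]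
    · exact fun j hj k hk => hA j (Finset.mem_insert_of_mem hj) k (Finset.mem_insert_of_mem hk)
    · exact fun j hj => hf j (Finset.mem_insert_of_mem hj)
    · rw [Finset.disjoint_biUnion_right]
      exact fun j hj => hA i (Finset.mem_insert_self _ _) j (Finset.mem_insert_of_mem hj)
        (fun h => hi (h ▸ hj))
    · exact hf i (Finset.mem_insert_self _ _)
    · intro s a ha
      refine Finset.prod_congr rfl fun j hj => hf j (Finset.mem_insert_of_mem hj) s a fun h => ha ?_
      exact Finset.mem_biUnion.2 ⟨j, hj, h⟩

theorem expect_mem {E : Finset α} {a : α} (ha : a ∈ E) (p : ℝ) :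
    expect E p (fun s => if a ∈ s then 1 else 0) = p := by
  obtain ⟨E', ha', rfl⟩ : ∃ E', a ∉ E' ∧ insert a E' = E :=
    ⟨E.erase a, Finset.notMem_erase a E, Finset.insert_erase ha⟩
  have : expect E' p (fun s => if a ∈ s then (1 : ℝ) else 0) = expect E' p (fun _ => 0) :=
    expect_congr fun s hs => if_neg fun h => ha' (hs h)
  rw [expect_insert ha', this]
  simp only [Finset.mem_insert_self, if_true, expect_const]
  ring

theorem prob_subset {E P : Finset α} (hP : P ⊆ E) (p : ℝ) :
    prob E p (fun s => P ⊆ s) = p ^ P.card := by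
  have h1 : prob E p (fun s => P ⊆ s) =
      expect E p (fun s => ∏ a ∈ P, if a ∈ s then (1 : ℝ) else 0) := by
    refine expect_congr fun s _ => ?_
    by_cases h : P ⊆ s
    · rw [if_pos h, Finset.prod_congr rfl fun a ha => if_pos (h ha)]; simp
    · obtain ⟨a, ha, has⟩ := Finset.not_subset.1 h
      rw [if_neg h, Finset.prod_eq_zero ha (if_neg has)]
  rw [h1, expect_prod_of_disjoint E p P (A := fun a => {a}),
    Finset.prod_congr rfl fun a ha => expect_mem (hP ha) p]
  · simp
  · intro i _ j _ hij; simpa using hij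
  · intro i _ s a ha
    have : i ≠ a := fun h => ha (by simp [h])
    simp [this]

theorem expect_exp_le (E : Finset α) {p L : ℝ} (h0 : 0 ≤ p) (h1 : p ≤ 1)
    {f : Finset α → ℝ} (hf : ∀ s a, |f (insert a s) - f s| ≤ L) :
    expect E p (fun s => Real.exp (f s - expect E p f)) ≤ Real.exp (L ^ 2 * E.card) := by
  induction E using Finset.induction_on generalizing f with
  | empty => simp [expect_empty]
  | insert a E ha ih =>
    set F0 := expect E p f with hF0
    set F1 := expect E p (fun s => f (insert a s)) with hF1
    set μ := expect (insert a E) p f with hμ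
    have hμ' : μ = p * F1 + (1 - p) * F0 := expect_insert ha p f
    have e0 := ih hf
    have e1 := ih (f := fun s => f (insert a s)) (fun s x => by
      rw [Finset.insert_comm]; exact hf (insert a s) x)
    have hd : |F1 - F0| ≤ L := by
      rw [hF1, hF0, ← expect_sub, abs_le]
      constructor
      · rw [← expect_const E p (-L)]
        exact expect_mono h0 h1 fun s _ => (abs_le.1 (hf s a)).1
      · rw [← expect_const E p L]
        exact expect_mono h0 h1 fun s _ => (abs_le.1 (hf s a)).2
    have r0 : expect E p (fun s => Real.exp (f s - μ)) ≤
        Real.exp (F0 - μ) * Real.exp (L ^ 2 * E.card) := by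
      have : expect E p (fun s => Real.exp (f s - μ)) =
          Real.exp (F0 - μ) * expect E p (fun s => Real.exp (f s - F0)) := by
        rw [← expect_const_mul]
        exact expect_congr fun s _ => by rw [← Real.exp_add]; ring_nf
      rw [this]
      exact mul_le_mul_of_nonneg_left e0 (Real.exp_pos _).le
    have r1 : expect E p (fun s => Real.exp (f (insert a s) - μ)) ≤
        Real.exp (F1 - μ) * Real.exp (L ^ 2 * E.card) := by
      have : expect E p (fun s => Real.exp (f (insert a s) - μ)) =
          Real.exp (F1 - μ) * expect E p (fun s => Real.exp (f (insert a s) - F1)) := by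
        rw [← expect_const_mul]
        exact expect_congr fun s _ => by rw [← Real.exp_add]; ring_nf
      rw [this]
      exact mul_le_mul_of_nonneg_left e1 (Real.exp_pos _).le
    have hsq : (F1 - F0) ^ 2 ≤ L ^ 2 := by
      rw [← sq_abs]; exact pow_le_pow_left₀ (abs_nonneg _) hd 2
    have b1 : Real.exp (F1 - μ) ≤ (F1 - μ) + Real.exp (L ^ 2) := by
      refine (exp_le_add_exp_sq _).trans (add_le_add le_rfl (Real.exp_le_exp.2 ?_))
      have : F1 - μ = (1 - p) * (F1 - F0) := by rw [hμ']; ring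
      rw [this, mul_pow]
      have : (1 - p) ^ 2 ≤ 1 := pow_le_one₀ (by linarith) (by linarith)
      nlinarith [sq_nonneg (F1 - F0)]
    have b0 : Real.exp (F0 - μ) ≤ (F0 - μ) + Real.exp (L ^ 2) := by
      refine (exp_le_add_exp_sq _).trans (add_le_add le_rfl (Real.exp_le_exp.2 ?_))
      have : F0 - μ = -p * (F1 - F0) := by rw [hμ']; ring
      rw [this, mul_pow]
      have : (-p) ^ 2 ≤ 1 := by rw [neg_sq]; exact pow_le_one₀ h0 h1
      nlinarith [sq_nonneg (F1 - F0)]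
    have key : p * Real.exp (F1 - μ) + (1 - p) * Real.exp (F0 - μ) ≤ Real.exp (L ^ 2) := by
      have h1p : 0 ≤ 1 - p := by linarith
      have := add_le_add (mul_le_mul_of_nonneg_left b1 h0) (mul_le_mul_of_nonneg_left b0 h1p)
      refine this.trans (le_of_eq ?_)
      rw [hμ']; ring
    rw [expect_insert ha]
    calc _ ≤ p * (Real.exp (F1 - μ) * Real.exp (L ^ 2 * E.card)) +
          (1 - p) * (Real.exp (F0 - μ) * Real.exp (L ^ 2 * E.card)) :=
          add_le_add (mul_le_mul_of_nonneg_left r1 h0)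
            (mul_le_mul_of_nonneg_left r0 (by linarith))
      _ = (p * Real.exp (F1 - μ) + (1 - p) * Real.exp (F0 - μ)) * Real.exp (L ^ 2 * E.card) := by
          ring
      _ ≤ Real.exp (L ^ 2) * Real.exp (L ^ 2 * E.card) :=
          mul_le_mul_of_nonneg_right key (Real.exp_pos _).le
      _ = _ := by
          rw [← Real.exp_add, Finset.card_insert_of_notMem ha]; push_cast; ring_nf

/-- Bounded-differences inequality, upper tail. -/
theorem prob_upper_tail (E : Finset α) {p L m x : ℝ} (h0 : 0 ≤ p) (h1 : p ≤ 1) (hL : 0 < L)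
    (hm : 0 < m) (hE : E.card ≤ m) (hx : 0 ≤ x) {f : Finset α → ℝ}
    (hf : ∀ s a, |f (insert a s) - f s| ≤ L) :
    prob E p (fun s => expect E p f + x ≤ f s) ≤ Real.exp (-(x ^ 2 / (4 * L ^ 2 * m))) := by
  set l := x / (2 * L ^ 2 * m) with hl
  have hl0 : 0 ≤ l := by positivity
  have hg := expect_exp_le E h0 h1 (f := fun s => l * f s) (L := l * L) (fun s a => by
    rw [← mul_sub, abs_mul, abs_of_nonneg hl0]; exact mul_le_mul_of_nonneg_left (hf s a) hl0)
  rw [expect_const_mul] at hg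
  have h2 : prob E p (fun s => expect E p f + x ≤ f s) ≤
      expect E p (fun s => Real.exp (-(l * x)) * Real.exp (l * f s - l * expect E p f)) := by
    refine expect_mono h0 h1 fun s _ => ?_
    rw [← Real.exp_add]
    split_ifs with h
    · refine Real.one_le_exp ?_
      nlinarith
    · exact (Real.exp_pos _).le
  rw [expect_const_mul] at h2
  refine h2.trans ((mul_le_mul_of_nonneg_left hg (Real.exp_pos _).le).trans ?_)
  rw [← Real.exp_add, Real.exp_le_exp]
  have h3 : (l * L) ^ 2 * E.card ≤ (l * L) ^ 2 * m := mul_le_mul_of_nonneg_left hE (sq_nonneg _)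
  have h4 : -(l * x) + (l * L) ^ 2 * m = -(x ^ 2 / (4 * L ^ 2 * m)) := by
    rw [hl]; field_simp; ring
  linarith

/-- Bounded-differences inequality, lower tail. -/
theorem prob_lower_tail (E : Finset α) {p L m x : ℝ} (h0 : 0 ≤ p) (h1 : p ≤ 1) (hL : 0 < L)
    (hm : 0 < m) (hE : E.card ≤ m) (hx : 0 ≤ x) {f : Finset α → ℝ}
    (hf : ∀ s a, |f (insert a s) - f s| ≤ L) :
    prob E p (fun s => f s ≤ expect E p f - x) ≤ Real.exp (-(x ^ 2 / (4 * L ^ 2 * m))) := by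
  have h := prob_upper_tail E h0 h1 hL hm hE hx (f := fun s => -1 * f s) (fun s a => by
    rw [← mul_sub, abs_mul]; simpa using hf s a)
  rw [expect_const_mul] at h
  refine le_trans (prob_mono h0 h1 fun s _ hs => ?_) h
  linarith

end RandomSubset

section Survival

/-- Probability that the percolated `m`-ary tree reaches depth `k`. -/
def survival (m : ℕ) (p : ℝ) : ℕ → ℝ
  | 0 => 1
  | k + 1 => 1 - (1 - p * survival m p k) ^ m

theorem survival_mem_Icc (m : ℕ) {p : ℝ} (h0 : 0 ≤ p) (h1 : p ≤ 1) (k : ℕ) :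
    0 ≤ survival m p k ∧ survival m p k ≤ 1 := by
  induction k with
  | zero => simp [survival]
  | succ k ih =>
    have h2 : 0 ≤ p * survival m p k := mul_nonneg h0 ih.1
    have h3 : p * survival m p k ≤ 1 := mul_le_one₀ h1 ih.1 ih.2
    have h4 : (1 - p * survival m p k) ^ m ≤ 1 := pow_le_one₀ (by linarith) (by linarith)
    have h5 : 0 ≤ (1 - p * survival m p k) ^ m := pow_nonneg (by linarith) _
    simp only [survival]
    constructor <;> linarith

theorem pow_sub_pow_le_mul {a b : ℝ} (hb : 0 ≤ b) (hab : b ≤ a) (ha : a ≤ 1) (m : ℕ) :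
    a ^ m - b ^ m ≤ m * (a - b) := by
  induction m with
  | zero => simp
  | succ m ih =>
    have h1 : a ^ (m + 1) - b ^ (m + 1) = a * (a ^ m - b ^ m) + b ^ m * (a - b) := by ring
    have h2 : a * (a ^ m - b ^ m) ≤ 1 * (a ^ m - b ^ m) :=
      mul_le_mul_of_nonneg_right ha (sub_nonneg.2 (pow_le_pow_left₀ hb hab m))
    have h3 : b ^ m * (a - b) ≤ 1 * (a - b) :=
      mul_le_mul_of_nonneg_right (pow_le_one₀ hb (hab.trans ha)) (by linarith)
    push_cast
    linarith

theorem exists_pos_le_survival {m : ℕ} {p : ℝ} (hmp : 1 < m * p) (h0 : 0 < p) (h1 : p < 1) :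
    ∃ t₀ > 0, ∀ k, t₀ ≤ survival m p k := by
  have hmp0 : 0 < m * p := by linarith
  have ht : (m * p - 1) / (m * p) * (m * p) = m * p - 1 :=
    div_mul_cancel₀ _ hmp0.ne'
  set t₀ := (m * p - 1) / (m * p) with ht₀
  have ht0 : 0 < t₀ := div_pos (by linarith) hmp0
  have ht1 : t₀ < 1 := by rw [ht₀, div_lt_one hmp0]; linarith
  refine ⟨t₀, ht0, fun k => ?_⟩
  induction k with
  | zero => exact ht1.le
  | succ k ih =>
    have hk := (survival_mem_Icc m h0.le h1.le k).2
    have h2 : (1 - p * survival m p k) ^ m ≤ (1 - p * t₀) ^ m :=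
      pow_le_pow_left₀ (by nlinarith) (by nlinarith) m
    have h3 : 1 + m * (p * t₀) ≤ (1 + p * t₀) ^ m :=
      one_add_mul_le_pow (by nlinarith [mul_pos h0 ht0]) m
    have h4 : (1 - p * t₀) ^ m * (1 + p * t₀) ^ m ≤ 1 := by
      rw [← mul_pow]
      refine pow_le_one₀ ?_ ?_ <;> nlinarith [mul_pos h0 ht0]
    have h5 : 0 ≤ (1 - p * t₀) ^ m := pow_nonneg (by nlinarith) _
    have h6 : (1 - p * t₀) ^ m * (1 + m * (p * t₀)) ≤ 1 :=
      (mul_le_mul_of_nonneg_left h3 h5).trans h4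
    have h7 : 1 + m * (p * t₀) = m * p := by linarith
    have h8 : (1 - t₀) * (m * p) = 1 := by linarith
    rw [h7] at h6
    have h9 : (1 - p * t₀) ^ m ≤ 1 - t₀ := by
      by_contra h
      push Not at h
      nlinarith
    simp only [survival]
    linarith

theorem exists_survival_gap {m : ℕ} (hm : 2 ≤ m) {p : ℝ} (h0 : 0 < p) (h1 : p < 1)
    {t₀ l : ℝ} (ht : 0 < t₀) (hl0 : 0 < l) (hl1 : l < 1) :
    ∃ γ > 0, ∀ t, t₀ ≤ t → t ≤ 1 →
      l * (1 - (1 - p * t) ^ m) + γ ≤ 1 - (1 - p * (l * t)) ^ m := by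
  let F : ℝ → ℝ := fun t => 1 - (1 - p * (l * t)) ^ m - l * (1 - (1 - p * t) ^ m)
  have hpos : ∀ t, t₀ ≤ t → t ≤ 1 → 0 < F t := by
    intro t h2 h3
    have h4 : 0 < p * t := mul_pos h0 (by linarith)
    have h5 : p * t < 1 := by nlinarith
    have := (strictConvexOn_pow hm).2 (Set.mem_Ici.2 zero_le_one)
      (Set.mem_Ici.2 (by linarith : (0 : ℝ) ≤ 1 - p * t)) (by linarith)
      (by linarith : 0 < 1 - l) hl0 (by ring)
    simp only [smul_eq_mul, one_pow, mul_one] at this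
    have e : 1 - l + l * (1 - p * t) = 1 - p * (l * t) := by ring
    rw [e] at this
    simp only [F]
    linarith
  have hcont : ContinuousOn F (Set.Icc t₀ 1) := by fun_prop
  rcases le_or_gt t₀ 1 with h | h
  · obtain ⟨u, hu, hmin⟩ := isCompact_Icc.exists_isMinOn (Set.nonempty_Icc.2 h) hcont
    refine ⟨F u, hpos u hu.1 hu.2, fun t h2 h3 => ?_⟩
    have : F u ≤ F t := hmin ⟨h2, h3⟩
    simp only [F] at this ⊢
    linarith
  · exact ⟨1, one_pos, fun t h2 h3 => absurd (h2.trans h3) (not_le.2 h)⟩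

/-- Uniform left-continuity of the survival probabilities in the supercritical regime. -/
theorem exists_survival_sub_le {m : ℕ} (hm : 2 ≤ m) {p : ℝ} (hmp : 1 < m * p) (h1 : p < 1)
    {ε : ℝ} (hε : 0 < ε) :
    ∃ p', 0 < p' ∧ p' < p ∧ ∀ k, survival m p k - survival m p' k ≤ ε := by
  have hm0 : (0 : ℝ) < m := by positivity
  have h0 : 0 < p := by
    by_contra h
    nlinarith [not_lt.1 h]
  obtain ⟨t₀, ht₀, hsurv⟩ := exists_pos_le_survival hmp h0 h1
  set l := 1 - min ε (1 / 2) with hl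
  have hl1 : l < 1 := by
    have : 0 < min ε (1 / 2) := lt_min hε (by norm_num)
    linarith
  have hl0 : 0 < l := by
    have : min ε (1 / 2) ≤ 1 / 2 := min_le_right _ _
    linarith
  have hlε : 1 - l ≤ ε := by
    have : min ε (1 / 2) ≤ ε := min_le_left _ _
    linarith
  obtain ⟨γ, hγ, hgap⟩ := exists_survival_gap hm h0 h1 ht₀ hl0 hl1
  set p' := max (p - γ / m) (p / 2) with hp'
  have hp'0 : 0 < p' := lt_max_of_lt_right (by linarith)
  have hp'p : p' < p := max_lt (by have := div_pos hγ hm0; linarith) (by linarith)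
  have hp'γ : m * (p - p') ≤ γ := by
    have : p - γ / m ≤ p' := le_max_left _ _
    have h2 : p - p' ≤ γ / m := by linarith
    calc m * (p - p') ≤ m * (γ / m) := mul_le_mul_of_nonneg_left h2 hm0.le
      _ = γ := by field_simp
  refine ⟨p', hp'0, hp'p, fun k => ?_⟩
  have key : l * survival m p k ≤ survival m p' k := by
    induction k with
    | zero => simp only [survival]; linarith
    | succ k ih =>
      set t := survival m p k with htk
      have ht0 : t₀ ≤ t := hsurv k
      have ht1 : t ≤ 1 := (survival_mem_Icc m h0.le h1.le k).2
      have hs := survival_mem_Icc m hp'0.le (hp'p.le.trans h1.le) k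
      have hlt : 0 ≤ l * t := mul_nonneg hl0.le (by linarith)
      have hlt1 : l * t ≤ 1 := mul_le_one₀ hl1.le (by linarith) ht1
      have g := hgap t ht0 ht1
      have a1 : (1 - p' * survival m p' k) ^ m ≤ (1 - p' * (l * t)) ^ m :=
        pow_le_pow_left₀ (by nlinarith) (by nlinarith) m
      have a2 := pow_sub_pow_le_mul (a := 1 - p' * (l * t)) (b := 1 - p * (l * t))
        (by nlinarith) (by nlinarith) (by nlinarith) m
      have a3 : (m : ℝ) * (1 - p' * (l * t) - (1 - p * (l * t))) ≤ γ := by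
        have : (m : ℝ) * (1 - p' * (l * t) - (1 - p * (l * t))) = (m * (p - p')) * (l * t) := by
          ring
        rw [this]
        have : 0 ≤ m * (p - p') := mul_nonneg hm0.le (by linarith)
        nlinarith
      simp only [survival]
      linarith
  have := (survival_mem_Icc m h0.le h1.le k)
  nlinarith

end Survival

section Paths

set_option linter.unusedSectionVars false

variable {V : Type} {K : SimpleGraph V}

/-- Every cycle of `K` has length more than `N`. -/
def NoShortCycle (K : SimpleGraph V) (N : ℕ) : Prop :=
  ∀ (v : V) (c : K.Walk v v), c.IsCycle → N < c.length

theorem NoShortCycle.mono {K K' : SimpleGraph V} {N : ℕ} (h : NoShortCycle K N) (hK : K' ≤ K) :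
    NoShortCycle K' N := fun v c hc => by
  simpa using h v (c.mapLe hK) (hc.mapLe hK)

theorem NoShortCycle.path_unique {N : ℕ} (hK : NoShortCycle K N) {u v : V} {p q : K.Walk u v}
    (hp : p.IsPath) (hq : q.IsPath) (hN : p.length + q.length ≤ N) : p = q := by
  set J : SimpleGraph V := SimpleGraph.fromEdgeSet {e | e ∈ p.edges ∨ e ∈ q.edges} with hJ
  have hmem : ∀ e, e ∈ J.edgeSet → e ∈ p.edges ∨ e ∈ q.edges := fun e he => by
    rw [hJ, SimpleGraph.edgeSet_fromEdgeSet] at he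
    exact he.1
  have hJK : J ≤ K := fun a b hab => by
    rcases hmem _ ((SimpleGraph.mem_edgeSet J).2 hab) with h | h
    · exact p.edges_subset_edgeSet h
    · exact q.edges_subset_edgeSet h
  have hsub : ∀ e, (e ∈ p.edges ∨ e ∈ q.edges) → e ∈ J.edgeSet := fun e he => by
    rw [hJ, SimpleGraph.edgeSet_fromEdgeSet]
    refine ⟨he, ?_⟩
    rcases he with h | h
    · exact K.not_isDiag_of_mem_edgeSet (p.edges_subset_edgeSet h)
    · exact K.not_isDiag_of_mem_edgeSet (q.edges_subset_edgeSet h)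
  have hacyc : J.IsAcyclic := fun v c hc => by
    have h1 := hK v (c.mapLe hJK) (hc.mapLe hJK)
    have h2 : c.edges.toFinset ⊆ p.edges.toFinset ∪ q.edges.toFinset := fun e he => by
      simpa using hmem e (c.edges_subset_edgeSet (List.mem_toFinset.1 he))
    have h3 := Finset.card_le_card h2
    rw [List.toFinset_card_of_nodup hc.isTrail.edges_nodup, SimpleGraph.Walk.length_edges] at h3
    have h4 := Finset.card_union_le p.edges.toFinset q.edges.toFinset
    have h5 := p.edges.toFinset_card_le
    have h6 := q.edges.toFinset_card_le
    rw [SimpleGraph.Walk.length_edges] at h5 h6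
    simp only [SimpleGraph.Walk.length_map] at h1
    omega
  have hp' := hp.transfer (H := J) (fun e he => hsub e (Or.inl he))
  have hq' := hq.transfer (H := J) (fun e he => hsub e (Or.inr he))
  have := congrArg Subtype.val ((hacyc.subsingleton_path u v).elim ⟨_, hp'⟩ ⟨_, hq'⟩)
  apply SimpleGraph.Walk.ext_support
  simpa using congrArg SimpleGraph.Walk.support this

theorem NoShortCycle.notMem_support {N : ℕ} (hK : NoShortCycle K N) {x y u : V}
    (h : K.Adj x y) {q : K.Walk y u} (hq : q.IsPath) (hx : q.snd ≠ x) (hN : q.length + 1 ≤ N) :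
    x ∉ q.support := by
  intro hmem
  cases q with
  | nil => simp at hmem; exact h.ne hmem
  | @cons _ z _ h' q' =>
    rw [SimpleGraph.Walk.snd_cons] at hx
    have hxq : x ∈ q'.support := by
      rw [SimpleGraph.Walk.support_cons, List.mem_cons] at hmem
      exact hmem.resolve_left h.ne
    have h1 := hq.takeUntil hmem
    have h2 : (SimpleGraph.Walk.cons h.symm SimpleGraph.Walk.nil : K.Walk y x).IsPath := by
      simp [h.ne']
    have h3 := (SimpleGraph.Walk.cons h' q').length_takeUntil_le_length hmem
    have h4 := hK.path_unique h1 h2 (by simp at h3 hN ⊢; omega)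
    rw [SimpleGraph.Walk.takeUntil_cons hxq h.ne'] at h4
    simp only [SimpleGraph.Walk.cons.injEq] at h4
    exact hx h4.1

variable (G : SimpleGraph V)

/-- There is a non-backtracking walk of length `k` along edges of `G` in `s` that starts at `y`
and whose first step does not go to `x`. -/
def Extends (s : Finset (Sym2 V)) : ℕ → V → V → Prop
  | 0, _, _ => True
  | k + 1, x, y => ∃ z, z ≠ x ∧ G.Adj y z ∧ s(y, z) ∈ s ∧ Extends s k y z

variable {G}

theorem Extends.mono {s t : Finset (Sym2 V)} (hst : s ⊆ t) {k : ℕ} {x y : V}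
    (h : Extends G s k x y) : Extends G t k x y := by
  induction k generalizing x y with
  | zero => trivial
  | succ k ih =>
    obtain ⟨z, h1, h2, h3, h4⟩ := h
    exact ⟨z, h1, h2, hst h3, ih h4⟩

variable [Fintype V] [DecidableEq V] (G)

/-- The neighbours of `y` other than `x`. -/
def forward (x y : V) : Finset V := Finset.univ.filter fun z => z ≠ x ∧ G.Adj y z

/-- The edges on which `Extends G · k x y` depends. -/
def branchEdges : ℕ → V → V → Finset (Sym2 V)
  | 0, _, _ => ∅
  | k + 1, x, y => (forward G x y).biUnion fun z => insert s(y, z) (branchEdges k y z)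

variable {G}

theorem mem_forward {x y z : V} : z ∈ forward G x y ↔ z ≠ x ∧ G.Adj y z := by
  simp [forward]

theorem extends_insert_iff {s : Finset (Sym2 V)} {a : Sym2 V} {k : ℕ} {x y : V}
    (ha : a ∉ branchEdges G k x y) : Extends G (insert a s) k x y ↔ Extends G s k x y := by
  induction k generalizing x y with
  | zero => exact Iff.rfl
  | succ k ih =>
    simp only [branchEdges, Finset.mem_biUnion, not_exists, not_and, Finset.mem_insert,
      not_or] at ha
    simp only [Extends]
    refine exists_congr fun z => ?_
    by_cases hz : z ≠ x ∧ G.Adj y z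
    · have h1 := ha z (mem_forward.2 hz)
      rw [ih h1.2, Finset.mem_insert, or_iff_right (Ne.symm h1.1)]
    · constructor <;> rintro ⟨h1, h2, _⟩ <;> exact absurd ⟨h1, h2⟩ hz

theorem Extends.exists_path {N : ℕ} (hG : NoShortCycle G N) {s : Finset (Sym2 V)} {k : ℕ}
    (hk : k + 1 ≤ N) {x y : V} (hxy : G.Adj x y) (h : Extends G s k x y) :
    ∃ (u : V) (q : G.Walk y u), q.IsPath ∧ q.length = k ∧ x ∉ q.support ∧ ∀ e ∈ q.edges, e ∈ s := by
  induction k generalizing x y with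
  | zero => exact ⟨y, .nil, by simp, rfl, by simp [hxy.ne], by simp⟩
  | succ k ih =>
    obtain ⟨z, hzx, hyz, hs, h⟩ := h
    obtain ⟨u, q, hq, hl, hy, he⟩ := ih (by omega) hyz h
    have hp : (SimpleGraph.Walk.cons hyz q).IsPath := hq.cons hy
    refine ⟨u, .cons hyz q, hp, by simp [hl], hG.notMem_support hxy hp (by simpa using hzx)
      (by simp; omega), ?_⟩
    simpa [hs] using he

theorem extends_of_isPath {H : SimpleGraph V} (hH : H ≤ G) {s : Finset (Sym2 V)} {y u : V}
    (q : H.Walk y u) (hq : q.IsPath) (hs : ∀ e ∈ q.edges, e ∈ s) {x : V} (hx : q.snd ≠ x) {k : ℕ}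
    (hk : k ≤ q.length) : Extends G s k x y := by
  induction q generalizing x k with
  | nil =>
    obtain rfl : k = 0 := by simpa using hk
    trivial
  | @cons y z u h q ih =>
    cases k with
    | zero => trivial
    | succ k =>
      rw [SimpleGraph.Walk.cons_isPath_iff] at hq
      refine ⟨z, by simpa using hx, hH h, hs _ (by simp), ih hq.1 (fun e he => hs e (by simp [he]))
        (fun hy => hq.2 ?_) (by simpa using hk)⟩
      rw [← hy]
      exact q.getVert_mem_support 1

theorem exists_path_of_mem_branchEdges {N : ℕ} (hG : NoShortCycle G N) {k : ℕ} (hk : k + 2 ≤ N)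
    {y z : V} (hyz : G.Adj y z) {e : Sym2 V} (he : e ∈ insert s(y, z) (branchEdges G k y z)) :
    ∃ (w u : V) (q : G.Walk y w) (h : G.Adj w u), (q.concat h).IsPath ∧ q.length ≤ k ∧
      e = s(w, u) ∧ (q.concat h).snd = z := by
  induction k generalizing y z with
  | zero =>
    rw [branchEdges, Finset.mem_insert, or_iff_left (Finset.notMem_empty _)] at he
    exact ⟨y, z, .nil, hyz, by simp [SimpleGraph.Walk.concat_nil, hyz.ne], by simp, he,
      by simp [SimpleGraph.Walk.concat_nil]⟩
  | succ k ih =>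
    rw [Finset.mem_insert] at he
    rcases he with rfl | he
    · exact ⟨y, z, .nil, hyz, by simp [SimpleGraph.Walk.concat_nil, hyz.ne], by simp, rfl,
        by simp [SimpleGraph.Walk.concat_nil]⟩
    · simp only [branchEdges, Finset.mem_biUnion] at he
      obtain ⟨z', hz', he⟩ := he
      rw [mem_forward] at hz'
      obtain ⟨w, u, q, h, hp, hl, rfl, hs⟩ := ih (by omega) hz'.2 he
      have hy := hG.notMem_support hyz hp (by rw [hs]; exact hz'.1) (by simp; omega)
      refine ⟨w, u, .cons hyz q, h, ?_, by simpa using hl, rfl, ?_⟩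
      · rw [SimpleGraph.Walk.concat_cons]
        exact hp.cons hy
      · rw [SimpleGraph.Walk.concat_cons, SimpleGraph.Walk.snd_cons]

theorem disjoint_branchEdges {N : ℕ} (hG : NoShortCycle G N) {k : ℕ} (hk : 2 * (k + 1) ≤ N)
    {y z z' : V} (hyz : G.Adj y z) (hyz' : G.Adj y z') (hne : z ≠ z') :
    Disjoint (insert s(y, z) (branchEdges G k y z)) (insert s(y, z') (branchEdges G k y z')) := by
  rw [Finset.disjoint_left]
  intro e he he'
  obtain ⟨w, u, q, h, hp, hl, rfl, hs⟩ := exists_path_of_mem_branchEdges hG (by omega) hyz he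
  obtain ⟨w', u', q', h', hp', hl', heq, hs'⟩ :=
    exists_path_of_mem_branchEdges hG (by omega) hyz' he'
  rcases Sym2.eq_iff.1 heq with ⟨rfl, rfl⟩ | ⟨rfl, rfl⟩
  · have := hG.path_unique hp hp' (by simp; omega)
    rw [← hs, ← hs', this] at hne
    exact hne rfl
  · rw [SimpleGraph.Walk.concat_isPath_iff] at hp
    have := hG.path_unique hp.1 hp' (by simp; omega)
    refine hp.2 ?_
    rw [this]
    simp [SimpleGraph.Walk.support_concat]

theorem notMem_branchEdges {N : ℕ} (hG : NoShortCycle G N) {k : ℕ} (hk : k + 2 ≤ N)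
    {y z : V} (hyz : G.Adj y z) : s(y, z) ∉ branchEdges G k y z := by
  cases k with
  | zero => simp [branchEdges]
  | succ k =>
    intro he
    simp only [branchEdges, Finset.mem_biUnion] at he
    obtain ⟨z', hz', he⟩ := he
    rw [mem_forward] at hz'
    obtain ⟨w, u, q, h, hp, hl, heq, hs⟩ := exists_path_of_mem_branchEdges hG (by omega) hz'.2 he
    refine hG.notMem_support hyz hp (by rw [hs]; exact hz'.1) (by simp; omega) ?_
    rw [SimpleGraph.Walk.support_concat]
    rcases Sym2.eq_iff.1 heq with ⟨rfl, -⟩ | ⟨rfl, -⟩ <;> simp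

theorem mem_edgeFinset' {e : Sym2 V} : e ∈ edgeFinset' G ↔ e ∈ G.edgeSet := by
  simp [edgeFinset']

/-- In a graph of large girth, the probability that a dart extends to depth `k` is that of a
regular tree. -/
theorem expect_extends {N : ℕ} (hG : NoShortCycle G N) {m : ℕ}
    (hm : ∀ x y, G.Adj x y → (forward G x y).card = m) (p : ℝ) {k : ℕ} (hk : 2 * (k + 1) ≤ N)
    {x y : V} (hxy : G.Adj x y) :
    expect (edgeFinset' G) p (fun s => if Extends G s k x y then 1 else 0) = survival m p k := by
  induction k generalizing x y with
  | zero => simp [Extends, survival, expect_const]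
  | succ k ih =>
    have h1 : ∀ s : Finset (Sym2 V), (if Extends G s (k + 1) x y then (1 : ℝ) else 0) =
        1 - ∏ z ∈ forward G x y, (1 - (if s(y, z) ∈ s then (1 : ℝ) else 0) *
          (if Extends G s k y z then 1 else 0)) := fun s => by
      by_cases h : Extends G s (k + 1) x y
      · rw [if_pos h]
        obtain ⟨z, hzx, hyz, hs, h⟩ := h
        rw [Finset.prod_eq_zero (mem_forward.2 ⟨hzx, hyz⟩) (by simp [hs, h]), sub_zero]
      · rw [if_neg h, Finset.prod_eq_one, sub_self]
        intro z hz
        rw [mem_forward] at hz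
        by_cases hs : s(y, z) ∈ s
        · rw [if_neg (fun h' => h ⟨z, hz.1, hz.2, hs, h'⟩)]; simp
        · rw [if_neg hs]; simp
    simp only [h1]
    rw [expect_sub, expect_const, expect_prod_of_disjoint (f := fun z (s : Finset (Sym2 V)) =>
      1 - (if s(y, z) ∈ s then (1 : ℝ) else 0) * (if Extends G s k y z then 1 else 0))
      (A := fun z => insert s(y, z) (branchEdges G k y z))]
    · rw [survival, ← hm x y hxy]
      congr 1
      refine Finset.prod_eq_pow_card fun z hz => ?_
      rw [mem_forward] at hz
      rw [expect_sub, expect_const, expect_mul_of_disjoint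
        (f := fun s : Finset (Sym2 V) => if s(y, z) ∈ s then (1 : ℝ) else 0)
        (g := fun s : Finset (Sym2 V) => if Extends G s k y z then (1 : ℝ) else 0)
        (A := {s(y, z)})
        (B := branchEdges G k y z), expect_mem (mem_edgeFinset'.2 ((SimpleGraph.mem_edgeSet G).2 hz.2)), ih (by omega) hz.2, hm x y hxy]
      · rw [Finset.disjoint_singleton_left]
        exact notMem_branchEdges hG (by omega) hz.2
      · intro s a ha
        rw [Finset.mem_singleton] at ha
        simp [Finset.mem_insert, Ne.symm ha]
      · intro s a ha
        simp only [extends_insert_iff ha]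
    · intro z hz z' hz' hne
      rw [mem_forward] at hz hz'
      exact disjoint_branchEdges hG (by omega) hz.2 hz'.2 hne
    · intro z hz s a ha
      rw [Finset.mem_insert, not_or] at ha
      simp only [extends_insert_iff ha.2, Finset.mem_insert, Ne.symm ha.1, false_or]

/-- The ordered pairs of adjacent vertices of `G`. -/
def darts (G : SimpleGraph V) : Finset (V × V) := Finset.univ.filter fun a => G.Adj a.1 a.2

/-- The number of darts that extend to depth `k` inside `s`. -/
def extendCount (G : SimpleGraph V) (k : ℕ) (s : Finset (Sym2 V)) : ℝ :=
  ∑ a ∈ darts G, if Extends G s k a.1 a.2 then 1 else 0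

theorem mem_darts {x y : V} : (x, y) ∈ darts G ↔ G.Adj x y := by simp [darts]

theorem expect_extendCount {N : ℕ} (hG : NoShortCycle G N) {m : ℕ}
    (hm : ∀ x y, G.Adj x y → (forward G x y).card = m) (p : ℝ) {k : ℕ} (hk : 2 * (k + 1) ≤ N) :
    expect (edgeFinset' G) p (extendCount G k) = (darts G).card * survival m p k := by
  unfold extendCount
  rw [expect_sum, Finset.sum_congr rfl fun a ha =>
    expect_extends hG hm p hk (mem_darts.1 ha)]
  simp

/-- Bound for the number of darts whose branch of depth `k` contains a given edge. -/
def influence (d : ℕ) : ℕ → ℕ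
  | 0 => 0
  | k + 1 => d * (2 + influence d k)

theorem card_branch_le {d : ℕ} (hd : ∀ v, (G.neighborSet v).ncard ≤ d) (k : ℕ) (e : Sym2 V) :
    ((darts G).filter fun a => e ∈ branchEdges G k a.1 a.2).card ≤ influence d k := by
  induction k with
  | zero => simp [branchEdges, influence]
  | succ k ih =>
    set T := (darts G).filter fun a => e = s(a.1, a.2) ∨ e ∈ branchEdges G k a.1 a.2 with hT
    have h1 : T.card ≤ 2 + influence d k := by
      rw [hT, Finset.filter_or]
      refine (Finset.card_union_le _ _).trans (add_le_add ?_ ih)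
      induction e using Sym2.ind with
      | _ u v =>
        refine (Finset.card_le_card (t := {(u, v), (v, u)}) ?_).trans Finset.card_le_two
        rintro ⟨a, b⟩ hab
        have := Sym2.eq_iff.1 (Finset.mem_filter.1 hab).2
        simp only [Finset.mem_insert, Finset.mem_singleton, Prod.mk.injEq]
        tauto
    have h2 : ((darts G).filter fun a => e ∈ branchEdges G (k + 1) a.1 a.2) ⊆
        T.biUnion fun a => (Finset.univ.filter fun x => G.Adj a.1 x).image fun x => (x, a.1) := by
      rintro ⟨x, y⟩ hxy
      simp only [Finset.mem_filter, mem_darts, branchEdges, Finset.mem_biUnion, mem_forward,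
        Finset.mem_insert] at hxy
      obtain ⟨hxy, z, hz, he⟩ := hxy
      simp only [Finset.mem_biUnion, Finset.mem_image, Finset.mem_filter, Finset.mem_univ,
        true_and]
      exact ⟨(y, z), by simp [hT, mem_darts, hz.2, he], x, hxy.symm, rfl⟩
    refine (Finset.card_le_card h2).trans (Finset.card_biUnion_le.trans ?_)
    rw [influence, mul_comm]
    refine (Finset.sum_le_card_nsmul T _ d fun a _ => Finset.card_image_le.trans ?_).trans
      (by simpa using Nat.mul_le_mul_right d h1)
    refine le_trans (le_of_eq ?_) (hd a.1)
    rw [← Set.ncard_coe_finset]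
    congr 1
    ext x
    simp

theorem abs_extendCount_insert_sub_le {d : ℕ} (hd : ∀ v, (G.neighborSet v).ncard ≤ d) (k : ℕ)
    (s : Finset (Sym2 V)) (e : Sym2 V) :
    |extendCount G k (insert e s) - extendCount G k s| ≤ influence d k := by
  unfold extendCount
  rw [← Finset.sum_sub_distrib]
  refine (Finset.abs_sum_le_sum_abs _ _).trans ?_
  have h1 : ((((darts G).filter fun a => e ∈ branchEdges G k a.1 a.2).card : ℕ) : ℝ) ≤
      influence d k := by exact_mod_cast card_branch_le hd k e
  refine le_trans ?_ h1
  rw [Finset.card_eq_sum_ones, Nat.cast_sum, Finset.sum_filter]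
  refine Finset.sum_le_sum fun a _ => ?_
  by_cases h : e ∈ branchEdges G k a.1 a.2
  · rw [if_pos h]
    split_ifs <;> simp
  · rw [if_neg h]
    simp [extends_insert_iff h]

end Paths

section Growth

set_option linter.unusedSectionVars false

variable {V : Type} [Fintype V] [DecidableEq V] {G : SimpleGraph V}

/-- The edges of `F` joining `S` to its complement. -/
def boundary (F : Finset (Sym2 V)) (S : Finset V) : Finset (Sym2 V) :=
  F.filter fun e => ∃ x ∈ S, ∃ y, y ∉ S ∧ e = s(x, y)

/-- The edges of `F` meeting `W`. -/
def incident (F : Finset (Sym2 V)) (W : Finset V) : Finset (Sym2 V) :=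
  F.filter fun e => ∃ x ∈ W, x ∈ e

/-- The vertices at distance at most `i` from `A` along edges of `F`. -/
def grow (F : Finset (Sym2 V)) : ℕ → Finset V → Finset V
  | 0, A => A
  | i + 1, A => grow F i A ∪ Finset.univ.filter fun w => ∃ u ∈ grow F i A, s(u, w) ∈ F

theorem mem_boundary {F : Finset (Sym2 V)} {S : Finset V} {e : Sym2 V} :
    e ∈ boundary F S ↔ e ∈ F ∧ ∃ x ∈ S, ∃ y, y ∉ S ∧ e = s(x, y) := by
  simp [boundary]

theorem mem_incident {F : Finset (Sym2 V)} {W : Finset V} {e : Sym2 V} :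
    e ∈ incident F W ↔ e ∈ F ∧ ∃ x ∈ W, x ∈ e := by
  simp [incident]

theorem mem_grow_succ {F : Finset (Sym2 V)} {i : ℕ} {A : Finset V} {w : V} :
    w ∈ grow F (i + 1) A ↔ w ∈ grow F i A ∨ ∃ u ∈ grow F i A, s(u, w) ∈ F := by
  simp [grow]

theorem boundary_mono {F F' : Finset (Sym2 V)} (h : F ⊆ F') (S : Finset V) :
    boundary F S ⊆ boundary F' S :=
  Finset.filter_subset_filter _ h

theorem boundary_compl (F : Finset (Sym2 V)) (S : Finset V) : boundary F Sᶜ = boundary F S := by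
  ext e
  simp only [mem_boundary, Finset.mem_compl, not_not]
  refine and_congr_right fun _ => ⟨?_, ?_⟩ <;>
  · rintro ⟨x, hx, y, hy, rfl⟩
    exact ⟨y, hy, x, hx, Sym2.eq_swap⟩

theorem boundary_subset_union (F : Finset (Sym2 V)) {S T W : Finset V} (h : S ∆ T ⊆ W) :
    boundary F S ⊆ boundary F T ∪ incident F W := by
  intro e he
  obtain ⟨heF, x, hx, y, hy, rfl⟩ := mem_boundary.1 he
  rw [Finset.mem_union, mem_boundary, mem_incident]
  by_cases hxT : x ∈ T
  · by_cases hyT : y ∈ T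
    · exact Or.inr ⟨heF, y, h (Finset.mem_symmDiff.2 (Or.inr ⟨hyT, hy⟩)), by simp⟩
    · exact Or.inl ⟨heF, x, hxT, y, hyT, rfl⟩
  · exact Or.inr ⟨heF, x, h (Finset.mem_symmDiff.2 (Or.inl ⟨hx, hxT⟩)), by simp⟩

theorem card_filter_adj_le {d : ℕ} (hd : ∀ v, (G.neighborSet v).ncard ≤ d) (v : V) :
    (Finset.univ.filter fun x => G.Adj v x).card ≤ d := by
  refine le_trans (le_of_eq ?_) (hd v)
  rw [← Set.ncard_coe_finset]
  congr 1
  ext x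
  simp

theorem card_incident_le {d : ℕ} (hd : ∀ v, (G.neighborSet v).ncard ≤ d) {F : Finset (Sym2 V)}
    (hF : F ⊆ edgeFinset' G) (W : Finset V) : (incident F W).card ≤ d * W.card := by
  have h : incident F W ⊆
      W.biUnion fun x => (Finset.univ.filter fun y => G.Adj x y).image fun y => s(x, y) := by
    intro e he
    obtain ⟨heF, x, hx, hxe⟩ := mem_incident.1 he
    obtain ⟨y, rfl⟩ := hxe
    have := mem_edgeFinset'.1 (hF heF)
    simp only [Finset.mem_biUnion, Finset.mem_image, Finset.mem_filter, Finset.mem_univ, true_and]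
    exact ⟨x, hx, y, this, rfl⟩
  refine (Finset.card_le_card h).trans (Finset.card_biUnion_le.trans ?_)
  refine (Finset.sum_le_card_nsmul W _ d fun a _ =>
    Finset.card_image_le.trans (card_filter_adj_le hd a)).trans ?_
  rw [smul_eq_mul, mul_comm]

theorem card_edgeFinset'_le {d : ℕ} (hd : ∀ v, (G.neighborSet v).ncard ≤ d) :
    (edgeFinset' G).card ≤ d * Fintype.card V := by
  refine (Finset.card_le_card fun e he => ?_).trans
    (card_incident_le hd (Finset.Subset.refl _) Finset.univ)
  refine mem_incident.2 ⟨he, ?_⟩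
  induction e using Sym2.ind with
  | _ x y => exact ⟨x, Finset.mem_univ _, by simp⟩

theorem card_darts_le {d : ℕ} (hd : ∀ v, (G.neighborSet v).ncard ≤ d) :
    (darts G).card ≤ d * Fintype.card V := by
  have h : darts G ⊆ Finset.univ.biUnion fun x =>
      (Finset.univ.filter fun y => G.Adj x y).image fun y => (x, y) := by
    rintro ⟨x, y⟩ h
    rw [mem_darts] at h
    simp [h]
  refine (Finset.card_le_card h).trans (Finset.card_biUnion_le.trans ?_)
  refine (Finset.sum_le_card_nsmul _ _ d fun a _ =>
    Finset.card_image_le.trans (card_filter_adj_le hd a)).trans ?_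
  rw [smul_eq_mul, mul_comm, Finset.card_univ]

theorem subset_grow (F : Finset (Sym2 V)) (i : ℕ) (A : Finset V) : A ⊆ grow F i A := by
  induction i with
  | zero => exact Finset.Subset.refl _
  | succ i ih => exact ih.trans fun w hw => mem_grow_succ.2 (Or.inl hw)

theorem grow_mono {F : Finset (Sym2 V)} {i : ℕ} {A B : Finset V} (h : A ⊆ B) :
    grow F i A ⊆ grow F i B := by
  induction i with
  | zero => exact h
  | succ i ih =>
    intro w hw
    rcases mem_grow_succ.1 hw with hw | ⟨u, hu, hw⟩
    · exact mem_grow_succ.2 (Or.inl (ih hw))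
    · exact mem_grow_succ.2 (Or.inr ⟨u, ih hu, hw⟩)

theorem grow_grow (F : Finset (Sym2 V)) (i j : ℕ) (A : Finset V) :
    grow F j (grow F i A) = grow F (i + j) A := by
  induction j with
  | zero => rfl
  | succ j ih =>
    rw [← add_assoc]
    ext w
    rw [mem_grow_succ, mem_grow_succ, ih]

theorem mem_grow_singleton_comm {F : Finset (Sym2 V)} {i : ℕ} {v w : V}
    (h : w ∈ grow F i {v}) : v ∈ grow F i {w} := by
  induction i generalizing w with
  | zero => simpa [grow, eq_comm] using h
  | succ i ih =>
    rcases mem_grow_succ.1 h with h | ⟨u, hu, hw⟩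
    · exact mem_grow_succ.2 (Or.inl (ih h))
    · rw [add_comm, ← grow_grow]
      refine grow_mono ?_ (ih hu)
      rw [Finset.singleton_subset_iff]
      exact mem_grow_succ.2 (Or.inr ⟨w, by simp [grow], by rwa [Sym2.eq_swap]⟩)

theorem mem_grow_trans {F : Finset (Sym2 V)} {i j : ℕ} {u v w : V}
    (h : v ∈ grow F i {u}) (h' : w ∈ grow F j {v}) : w ∈ grow F (i + j) {u} := by
  rw [← grow_grow]
  exact grow_mono (Finset.singleton_subset_iff.2 h) h'

theorem card_grow_le {d : ℕ} (hd : ∀ v, (G.neighborSet v).ncard ≤ d) {F : Finset (Sym2 V)}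
    (hF : F ⊆ edgeFinset' G) (i : ℕ) (A : Finset V) :
    (grow F i A).card ≤ (d + 1) ^ i * A.card := by
  induction i with
  | zero => simp [grow]
  | succ i ih =>
    have h : grow F (i + 1) A ⊆
        (grow F i A).biUnion fun x => insert x (Finset.univ.filter fun y => G.Adj x y) := by
      intro w hw
      rw [Finset.mem_biUnion]
      rcases mem_grow_succ.1 hw with hw | ⟨u, hu, hw⟩
      · exact ⟨w, hw, by simp⟩
      · have := mem_edgeFinset'.1 (hF hw)
        exact ⟨u, hu, by simpa using Or.inr this⟩
    refine (Finset.card_le_card h).trans (Finset.card_biUnion_le.trans ?_)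
    refine (Finset.sum_le_card_nsmul _ _ (d + 1) fun a _ =>
      (Finset.card_insert_le _ _).trans (Nat.succ_le_succ (card_filter_adj_le hd a))).trans ?_
    rw [smul_eq_mul, pow_succ]
    calc _ ≤ (d + 1) ^ i * A.card * (d + 1) := Nat.mul_le_mul_right _ ih
      _ = _ := by ring

theorem exists_crossing_of_mem_grow {F : Finset (Sym2 V)} {i : ℕ} {A : Finset V} {w : V}
    (h : w ∈ grow F i A) : ∃ P ⊆ F, P.card ≤ i ∧
      ∀ S : Finset V, A ⊆ S → w ∉ S → (boundary P S).Nonempty := by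
  induction i generalizing w with
  | zero => exact ⟨∅, by simp, by simp, fun S hS hw => absurd (hS h) hw⟩
  | succ i ih =>
    rcases mem_grow_succ.1 h with h | ⟨u, hu, hw⟩
    · obtain ⟨P, h1, h2, h3⟩ := ih h
      exact ⟨P, h1, by omega, h3⟩
    · obtain ⟨P, h1, h2, h3⟩ := ih hu
      refine ⟨insert s(u, w) P, Finset.insert_subset hw h1,
        (Finset.card_insert_le _ _).trans (by omega), fun S hS hwS => ?_⟩
      by_cases huS : u ∈ S
      · exact ⟨s(u, w), mem_boundary.2 ⟨by simp, u, huS, w, hwS, rfl⟩⟩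
      · exact (h3 S hS huS).mono (boundary_mono (Finset.subset_insert _ _) _)

theorem exists_boundary_of_mem_grow {F : Finset (Sym2 V)} {i : ℕ} {v w : V} {T : Finset V}
    (h : w ∈ grow F i {v}) (hv : v ∈ T) (hw : w ∉ T) :
    ∃ x, x ∈ grow F i {v} ∧ ∃ e ∈ boundary F T, x ∈ e := by
  induction i generalizing w with
  | zero =>
    rw [grow, Finset.mem_singleton] at h
    exact absurd (h ▸ hv) hw
  | succ i ih =>
    have key : ∀ u, u ∈ grow F i {v} → u ∉ T →
        ∃ x, x ∈ grow F (i + 1) {v} ∧ ∃ e ∈ boundary F T, x ∈ e := fun u hu huT => by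
      obtain ⟨x, hx, h'⟩ := ih hu huT
      exact ⟨x, mem_grow_succ.2 (Or.inl hx), h'⟩
    rcases mem_grow_succ.1 h with h | ⟨u, hu, huw⟩
    · exact key w h hw
    · by_cases huT : u ∈ T
      · exact ⟨u, mem_grow_succ.2 (Or.inl hu), s(u, w),
          mem_boundary.2 ⟨huw, u, huT, w, hw, rfl⟩, by simp⟩
      · exact key u hu huT

theorem mem_grow_of_walk {K : SimpleGraph V} {F : Finset (Sym2 V)} {u v : V} (q : K.Walk u v)
    (hq : ∀ e ∈ q.edges, e ∈ F) {i : ℕ} (hi : q.length ≤ i) {w : V} (hw : w ∈ q.support) :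
    w ∈ grow F i {u} := by
  induction q generalizing i with
  | nil =>
    rw [SimpleGraph.Walk.support_nil, List.mem_singleton] at hw
    exact subset_grow _ _ _ (by simp [hw])
  | @cons a b c h q ih =>
    cases i with
    | zero => simp at hi
    | succ i =>
      rw [SimpleGraph.Walk.support_cons, List.mem_cons] at hw
      rcases hw with rfl | hw
      · exact subset_grow _ _ _ (by simp)
      · rw [add_comm]
        refine mem_grow_trans ?_ (ih (fun e he => hq e (by simp [he])) (by simpa using hi) hw)
        exact mem_grow_succ.2 (Or.inr ⟨a, by simp [grow], hq _ (by simp)⟩)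

end Growth

section Separation

variable {V : Type} [Fintype V] [DecidableEq V] {G : SimpleGraph V}

theorem IsExpander.le_card_grow {b : ℝ} {d : ℕ} (hG : IsExpander G b d) (hb : 0 < b) (hd : 0 < d)
    {α : ℝ} (hα : 0 < α) {A : Finset V} (hA : α * Fintype.card V ≤ A.card)
    {M : Finset (Sym2 V)} (hM : (M.card : ℝ) ≤ b * α / 2 * Fintype.card V) (i : ℕ) :
    (Fintype.card V : ℝ) / 2 < (grow (edgeFinset' G \ M) i A).card ∨
      i * (b * α / (2 * d)) * Fintype.card V ≤ (grow (edgeFinset' G \ M) i A).card := by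
  have hd' : (0 : ℝ) < d := by exact_mod_cast hd
  induction i with
  | zero => right; simp
  | succ i ih =>
    set F := edgeFinset' G \ M
    set B := grow F i A with hB
    set B' := grow F (i + 1) A with hB'
    have hBB : B ⊆ B' := fun w hw => mem_grow_succ.2 (Or.inl hw)
    have hBB' : (B.card : ℝ) ≤ B'.card := by exact_mod_cast Finset.card_le_card hBB
    rcases ih with ih | ih
    · left; linarith
    rcases lt_or_ge ((Fintype.card V : ℝ) / 2) B.card with hlt | hle
    · left; linarith
    right
    have h1 := hG.2 B hle
    have h2 : boundary (edgeFinset' G) B ⊆ M ∪ incident (edgeFinset' G) (B' \ B) := by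
      intro e he
      obtain ⟨heE, x, hx, y, hy, rfl⟩ := mem_boundary.1 he
      rw [Finset.mem_union]
      by_cases hM : s(x, y) ∈ M
      · exact Or.inl hM
      · refine Or.inr (mem_incident.2 ⟨heE, y, Finset.mem_sdiff.2 ⟨?_, hy⟩, by simp⟩)
        exact mem_grow_succ.2 (Or.inr ⟨x, hx, Finset.mem_sdiff.2 ⟨heE, hM⟩⟩)
    have h3 : (cutCard G B : ℝ) ≤ M.card + d * (B' \ B).card := by
      have := (Finset.card_le_card h2).trans ((Finset.card_union_le _ _).trans
        (Nat.add_le_add_left (card_incident_le hG.1 (Finset.Subset.refl _) _) _))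
      exact_mod_cast this
    have h4 : ((B' \ B).card : ℝ) = B'.card - B.card := by
      rw [Finset.card_sdiff_of_subset hBB, Nat.cast_sub (Finset.card_le_card hBB)]
    have h5 : (A.card : ℝ) ≤ B.card := by exact_mod_cast Finset.card_le_card (subset_grow F i A)
    have h6 : b * (α * Fintype.card V) ≤ b * B.card :=
      mul_le_mul_of_nonneg_left (hA.trans h5) hb.le
    have h7 : b * α / 2 * Fintype.card V ≤ d * (B'.card - B.card) := by rw [← h4]; linarith
    have h8 : b * α / (2 * d) * Fintype.card V ≤ B'.card - B.card := by
      rw [← mul_le_mul_iff_right₀ hd']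
      calc (d : ℝ) * (b * α / (2 * d) * Fintype.card V) = b * α / 2 * Fintype.card V := by
            field_simp
        _ ≤ _ := h7
    push_cast
    linarith

/-- Two linearly large sets in an expander are joined by a short path avoiding a small set of
edges. -/
theorem IsExpander.exists_crossing {b : ℝ} {d : ℕ} (hG : IsExpander G b d) (hb : 0 < b)
    (hd : 0 < d) {α : ℝ} (hα : 0 < α) (hV : 0 < Fintype.card V) {j : ℕ}
    (hj : 1 / 2 < j * (b * α / (2 * d))) {A B : Finset V} (hA : α * Fintype.card V ≤ A.card)
    (hB : α * Fintype.card V ≤ B.card) {M : Finset (Sym2 V)}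
    (hM : (M.card : ℝ) ≤ b * α / 2 * Fintype.card V) :
    ∃ P ⊆ edgeFinset' G \ M, P.card ≤ 2 * j ∧
      ∀ S : Finset V, A ⊆ S → Disjoint B S → (boundary P S).Nonempty := by
  have hV' : (0 : ℝ) < Fintype.card V := by exact_mod_cast hV
  have hlarge : ∀ C : Finset V, α * Fintype.card V ≤ C.card →
      (Fintype.card V : ℝ) / 2 < (grow (edgeFinset' G \ M) j C).card := fun C hC => by
    rcases hG.le_card_grow hb hd hα hC hM j with h | h
    · exact h
    · have := mul_lt_mul_of_pos_right hj hV'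
      linarith
  have h1 := hlarge A hA
  have h2 := hlarge B hB
  have h3 : ¬ Disjoint (grow (edgeFinset' G \ M) j A) (grow (edgeFinset' G \ M) j B) := fun h => by
    have h4 := Finset.card_le_univ (grow (edgeFinset' G \ M) j A ∪ grow (edgeFinset' G \ M) j B)
    rw [Finset.card_union_of_disjoint h] at h4
    have h5 : ((grow (edgeFinset' G \ M) j A).card : ℝ) + (grow (edgeFinset' G \ M) j B).card ≤
      Fintype.card V := by exact_mod_cast h4
    linarith
  obtain ⟨w, hwA, hwB⟩ := Finset.not_disjoint_iff.1 h3
  obtain ⟨P, hP, hPc, hPS⟩ := exists_crossing_of_mem_grow hwA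
  obtain ⟨Q, hQ, hQc, hQS⟩ := exists_crossing_of_mem_grow hwB
  refine ⟨P ∪ Q, Finset.union_subset hP hQ, (Finset.card_union_le _ _).trans (by omega),
    fun S hAS hBS => ?_⟩
  by_cases hw : w ∈ S
  · have := hQS Sᶜ (fun x hx => Finset.mem_compl.2 (Finset.disjoint_left.1 hBS hx))
      (by simpa using hw)
    rw [boundary_compl] at this
    exact this.mono (boundary_mono Finset.subset_union_right _)
  · exact (hPS S hAS hw).mono (boundary_mono Finset.subset_union_left _)

theorem IsExpander.exists_crossings {b : ℝ} {d : ℕ} (hG : IsExpander G b d) (hb : 0 < b)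
    (hd : 0 < d) {α : ℝ} (hα : 0 < α) (hV : 0 < Fintype.card V) {j : ℕ}
    (hj : 1 / 2 < j * (b * α / (2 * d))) {A B : Finset V} (hA : α * Fintype.card V ≤ A.card)
    (hB : α * Fintype.card V ≤ B.card) (hAB : Disjoint B A) (N : ℕ)
    (hN : (2 * j * (N - 1 : ℕ) : ℝ) ≤ b * α / 2 * Fintype.card V) :
    ∃ 𝒬 : Finset (Finset (Sym2 V)), 𝒬.card = N ∧
      (𝒬 : Set (Finset (Sym2 V))).PairwiseDisjoint id ∧
      ∀ P ∈ 𝒬, P ⊆ edgeFinset' G ∧ P.card ≤ 2 * j ∧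
        ∀ S : Finset V, A ⊆ S → Disjoint B S → (boundary P S).Nonempty := by
  induction N with
  | zero => exact ⟨∅, by simp⟩
  | succ N ih =>
    have hN' : (2 * j * N : ℝ) ≤ b * α / 2 * Fintype.card V := by simpa using hN
    have hmono : (2 * j * (N - 1 : ℕ) : ℝ) ≤ b * α / 2 * Fintype.card V := by
      refine le_trans ?_ hN'
      have : ((N - 1 : ℕ) : ℝ) ≤ N := by exact_mod_cast Nat.sub_le N 1
      gcongr
    obtain ⟨𝒬, hc, hdisj, h𝒬⟩ := ih hmono
    have hM : ((𝒬.biUnion id).card : ℝ) ≤ b * α / 2 * Fintype.card V := by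
      refine le_trans ?_ hN'
      have h1 := Finset.card_biUnion_le_card_mul 𝒬 id (2 * j) fun P hP => (h𝒬 P hP).2.1
      rw [hc] at h1
      have : ((𝒬.biUnion id).card : ℝ) ≤ ((N * (2 * j) : ℕ) : ℝ) := by exact_mod_cast h1
      push_cast at this
      linarith
    obtain ⟨P, hP, hPc, hPS⟩ := hG.exists_crossing hb hd hα hV hj hA hB hM
    have hPd : ∀ Q ∈ 𝒬, Disjoint P Q := fun Q hQ => by
      refine Finset.disjoint_left.2 fun e he heQ => ?_
      exact (Finset.mem_sdiff.1 (hP he)).2 (Finset.mem_biUnion.2 ⟨Q, hQ, heQ⟩)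
    have hPne : P.Nonempty :=
      (hPS A (Finset.Subset.refl _) hAB).mono (Finset.filter_subset _ _)
    have hP𝒬 : P ∉ 𝒬 := fun h => hPne.ne_empty (disjoint_self.1 (hPd P h))
    refine ⟨insert P 𝒬, by rw [Finset.card_insert_of_notMem hP𝒬, hc], ?_, ?_⟩
    · rw [Finset.coe_insert]
      exact hdisj.insert fun Q hQ _ => hPd Q hQ
    · intro Q hQ
      rcases Finset.mem_insert.1 hQ with rfl | hQ
      · exact ⟨hP.trans Finset.sdiff_subset, hPc, hPS⟩
      · exact h𝒬 Q hQ

theorem card_filter_subset_le_card_boundary {𝒬 : Finset (Finset (Sym2 V))}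
    (hdisj : (𝒬 : Set (Finset (Sym2 V))).PairwiseDisjoint id) {S : Finset V}
    (h𝒬 : ∀ P ∈ 𝒬, (boundary P S).Nonempty) (t : Finset (Sym2 V)) :
    (𝒬.filter (· ⊆ t)).card ≤ (boundary t S).card := by
  have h1 : ((𝒬.filter (· ⊆ t)).biUnion fun P => boundary P S) ⊆ boundary t S :=
    Finset.biUnion_subset.2 fun P hP => boundary_mono (Finset.mem_filter.1 hP).2 S
  refine le_trans (Finset.card_le_card_biUnion ?_ fun P hP => h𝒬 P (Finset.mem_filter.1 hP).1)
    (Finset.card_le_card h1)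
  intro P hP Q hQ hPQ
  have := hdisj (Finset.mem_filter.1 hP).1 (Finset.mem_filter.1 hQ).1 hPQ
  exact (Disjoint.mono (Finset.filter_subset _ _) (Finset.filter_subset _ _) this)

/-- Two linearly large sets in an expander are unlikely to be separated by few percolated edges. -/
theorem exists_prob_boundary_lt_le {b : ℝ} (hb : 0 < b) {d : ℕ} (hd : 0 < d) {α δ : ℝ}
    (hα : 0 < α) (hδ0 : 0 < δ) (hδ1 : δ ≤ 1) :
    ∃ κ > 0, ∃ c > 0, ∀ (V : Type) [Fintype V] [DecidableEq V] (G : SimpleGraph V),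
      IsExpander G b d → 0 < Fintype.card V → ∀ A B : Finset V, Disjoint B A →
        α * Fintype.card V ≤ A.card → α * Fintype.card V ≤ B.card →
        prob (edgeFinset' G) δ (fun t => ∃ S : Finset V, A ⊆ S ∧ Disjoint B S ∧
          ((boundary t S).card : ℝ) < κ * Fintype.card V) ≤ Real.exp (-(c * Fintype.card V)) := by
  have hd' : (0 : ℝ) < d := by exact_mod_cast hd
  obtain ⟨j, hj⟩ := exists_nat_gt (1 / 2 / (b * α / (2 * d)))
  rw [div_lt_iff₀ (by positivity)] at hj
  have hj0 : 0 < j := by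
    rcases Nat.eq_zero_or_pos j with rfl | h
    · norm_num at hj
    · exact h
  have hj0' : (0 : ℝ) < j := by exact_mod_cast hj0
  set ν := b * α / (4 * j) with hν
  have hν0 : 0 < ν := by positivity
  set κ := ν * δ ^ (2 * j) / 2 with hκ
  have hκ0 : 0 < κ := by positivity
  refine ⟨κ, hκ0, κ ^ 2 / (4 * d), by positivity, ?_⟩
  intro V _ _ G hG hV A B hAB hA hB
  have hV' : (0 : ℝ) < Fintype.card V := by exact_mod_cast hV
  set n : ℝ := (Fintype.card V : ℝ) with hn
  obtain ⟨𝒬, hc, hdisj, h𝒬⟩ := hG.exists_crossings hb hd hα hV hj hA hB hAB (⌊ν * n⌋₊ + 1) (by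
    rw [Nat.add_sub_cancel]
    have h1 := Nat.floor_le (a := ν * n) (by positivity)
    calc (2 * j * ⌊ν * n⌋₊ : ℝ) ≤ 2 * j * (ν * n) := by gcongr
      _ = b * α / 2 * n := by rw [hν]; field_simp; norm_num)
  set X : Finset (Sym2 V) → ℝ := fun t => ∑ P ∈ 𝒬, if P ⊆ t then 1 else 0 with hX
  have hXc : ∀ t, X t = (𝒬.filter (· ⊆ t)).card := fun t => by
    simp [hX]
  have hXlip : ∀ t a, |X (insert a t) - X t| ≤ 1 := fun t a => by
    have h1 : 𝒬.filter (· ⊆ t) ⊆ 𝒬.filter (· ⊆ insert a t) := fun P hP => by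
      rw [Finset.mem_filter] at hP ⊢
      exact ⟨hP.1, hP.2.trans (Finset.subset_insert _ _)⟩
    have h2 : (𝒬.filter (· ⊆ insert a t) \ 𝒬.filter (· ⊆ t)).card ≤ 1 := by
      rw [Finset.card_le_one]
      have haux : ∀ P ∈ 𝒬.filter (· ⊆ insert a t) \ 𝒬.filter (· ⊆ t), P ∈ 𝒬 ∧ a ∈ P := by
        intro P hP
        simp only [Finset.mem_sdiff, Finset.mem_filter, not_and] at hP
        refine ⟨hP.1.1, ?_⟩
        by_contra ha
        exact hP.2 hP.1.1 ((Finset.subset_insert_iff_of_notMem ha).1 hP.1.2)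
      intro P hP Q hQ
      by_contra hne
      exact Finset.disjoint_left.1 (hdisj (haux P hP).1 (haux Q hQ).1 hne)
        (haux P hP).2 (haux Q hQ).2
    have h3 := Finset.card_sdiff_add_card_eq_card h1
    rw [hXc, hXc, ← h3]
    push_cast
    rw [add_sub_cancel_right, abs_of_nonneg (by positivity)]
    exact_mod_cast h2
  have hEX : 2 * κ * n ≤ expect (edgeFinset' G) δ X := by
    rw [hX, expect_sum]
    have h1 : ∀ P ∈ 𝒬, δ ^ (2 * j) ≤
        expect (edgeFinset' G) δ (fun t => if P ⊆ t then (1 : ℝ) else 0) := fun P hP => by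
      have h2 := prob_subset (h𝒬 P hP).1 δ
      have h3 : δ ^ (2 * j) ≤ δ ^ P.card := pow_le_pow_of_le_one hδ0.le hδ1 (h𝒬 P hP).2.1
      rw [← h2] at h3
      refine h3.trans (le_of_eq ?_)
      unfold prob
      congr 1
      ext t
      by_cases h : P ⊆ t <;> simp [h]
    refine le_trans ?_ (Finset.card_nsmul_le_sum 𝒬 _ _ h1)
    rw [hc, nsmul_eq_mul]
    have h2 := (Nat.lt_floor_add_one (ν * n)).le
    push_cast
    calc 2 * κ * n = ν * n * δ ^ (2 * j) := by rw [hκ]; ring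
      _ ≤ _ := by gcongr
  have htail := prob_lower_tail (edgeFinset' G) hδ0.le hδ1 (L := 1) (m := d * n) (x := κ * n)
    one_pos (by positivity) (by rw [hn]; exact_mod_cast card_edgeFinset'_le hG.1) (by positivity) hXlip
  have heq : (κ * n) ^ 2 / (4 * 1 ^ 2 * (d * n)) = κ ^ 2 / (4 * d) * n := by
    field_simp
  rw [heq] at htail
  refine le_trans (prob_mono hδ0.le hδ1 ?_) htail
  rintro t - ⟨S, hAS, hBS, hlt⟩
  have h1 := card_filter_subset_le_card_boundary hdisj
    (fun P hP => (h𝒬 P hP).2.2 S hAS hBS) t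
  have h2 : X t ≤ (boundary t S).card := by rw [hXc]; exact_mod_cast h1
  linarith

end Separation

section Cells

variable {V : Type} [Fintype V] [DecidableEq V] {G : SimpleGraph V}

/-- The vertices whose ball of radius `r` along edges of `F` has more than `r` elements. -/
def thickSet (F : Finset (Sym2 V)) (r : ℕ) : Finset V :=
  Finset.univ.filter fun v => r + 1 ≤ (grow F r {v}).card

theorem exists_centers (F : Finset (Sym2 V)) (r : ℕ) :
    ∃ Z : Finset V, Z.card * (r + 1) ≤ Fintype.card V ∧
      ∀ v ∈ thickSet F r, ∃ z ∈ Z, z ∈ grow F (2 * r) {v} := by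
  set 𝒵 : Finset (Finset V) := (thickSet F r).powerset.filter fun Z =>
    (Z : Set V).PairwiseDisjoint fun z => grow F r {z} with h𝒵
  obtain ⟨Z, hZ, hmax⟩ := 𝒵.exists_max_image Finset.card ⟨∅, by simp [h𝒵]⟩
  rw [h𝒵, Finset.mem_filter, Finset.mem_powerset] at hZ
  refine ⟨Z, ?_, fun v hv => ?_⟩
  · rw [← Finset.card_univ]
    refine le_trans ?_ (Finset.card_le_univ (Z.biUnion fun z => grow F r {z}))
    rw [Finset.card_biUnion hZ.2, ← smul_eq_mul]
    exact Finset.card_nsmul_le_sum Z _ _ fun z hz => (Finset.mem_filter.1 (hZ.1 hz)).2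
  · by_contra! hcon
    have hvZ : v ∉ Z := fun h => hcon v h (subset_grow _ _ _ (by simp))
    have hmem : insert v Z ∈ 𝒵 := by
      rw [h𝒵, Finset.mem_filter, Finset.mem_powerset, Finset.coe_insert]
      refine ⟨Finset.insert_subset hv hZ.1, hZ.2.insert fun z hz _ => ?_⟩
      refine Finset.disjoint_left.2 fun w hw hw' => hcon z hz ?_
      rw [two_mul]
      exact mem_grow_trans hw (mem_grow_singleton_comm hw')
    have := hmax _ hmem
    rw [Finset.card_insert_of_notMem hvZ] at this
    omega

theorem card_filter_mem_le (B : Finset (Sym2 V)) :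
    (Finset.univ.filter fun x : V => ∃ e ∈ B, x ∈ e).card ≤ 2 * B.card := by
  have h : (Finset.univ.filter fun x : V => ∃ e ∈ B, x ∈ e) ⊆ B.biUnion Sym2.toFinset := by
    intro x hx
    simpa using hx
  refine (Finset.card_le_card h).trans ?_
  rw [mul_comm]
  refine Finset.card_biUnion_le_card_mul _ _ _ fun e _ => ?_
  rw [Sym2.card_toFinset]
  split_ifs <;> omega

/-- Up to a small error, the traces on `thickSet F r` of sets with small boundary belong to a
small family. -/
theorem exists_approx_family {d : ℕ} (hd : ∀ v, (G.neighborSet v).ncard ≤ d)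
    {F : Finset (Sym2 V)} (hF : F ⊆ edgeFinset' G) (r : ℕ) :
    ∃ 𝒜 : Finset (Finset V), (∃ m : ℕ, 𝒜.card ≤ 2 ^ m ∧ m * (r + 1) ≤ Fintype.card V) ∧
      ∀ T : Finset V, ∃ A ∈ 𝒜, A ⊆ thickSet F r ∧ (A ∆ (T ∩ thickSet F r)).card ≤
        (d + 1) ^ (2 * r) * (2 * (boundary F T).card) := by
  obtain ⟨Z, hZc, hZ⟩ := exists_centers F r
  choose! c hcZ hc using hZ
  refine ⟨Z.powerset.image fun Z₁ => (thickSet F r).filter fun v => c v ∈ Z₁,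
    ⟨Z.card, Finset.card_image_le.trans (by rw [Finset.card_powerset]), hZc⟩, fun T => ?_⟩
  refine ⟨(thickSet F r).filter fun v => c v ∈ Z ∩ T,
    Finset.mem_image.2 ⟨Z ∩ T, by simp, rfl⟩, Finset.filter_subset _ _, ?_⟩
  refine le_trans (Finset.card_le_card ?_) ((card_grow_le hd hF (2 * r)
    (Finset.univ.filter fun x => ∃ e ∈ boundary F T, x ∈ e)).trans
      (Nat.mul_le_mul_left _ (card_filter_mem_le _)))
  intro v hv
  have hvU : v ∈ thickSet F r := by
    rcases Finset.mem_symmDiff.1 hv with ⟨h, -⟩ | ⟨h, -⟩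
    · exact (Finset.mem_filter.1 h).1
    · exact (Finset.mem_inter.1 h).2
  have hx : ∃ x, x ∈ grow F (2 * r) {v} ∧ ∃ e ∈ boundary F T, x ∈ e := by
    rcases Finset.mem_symmDiff.1 hv with ⟨h1, h2⟩ | ⟨h1, h2⟩
    · have hcT : c v ∈ T := (Finset.mem_inter.1 (Finset.mem_filter.1 h1).2).2
      have hvT : v ∉ T := fun h => h2 (Finset.mem_inter.2 ⟨h, hvU⟩)
      rw [← boundary_compl]
      exact exists_boundary_of_mem_grow (hc v hvU) (by simpa using hvT) (by simpa using hcT)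
    · have hvT : v ∈ T := (Finset.mem_inter.1 h1).1
      have hcT : c v ∉ T := fun h => h2 (Finset.mem_filter.2 ⟨hvU,
        Finset.mem_inter.2 ⟨hcZ v hvU, h⟩⟩)
      exact exists_boundary_of_mem_grow (hc v hvU) hvT hcT
  obtain ⟨x, hxv, hxe⟩ := hx
  refine grow_mono ?_ (mem_grow_singleton_comm hxv)
  simpa using hxe

/-- If approximating cells cannot be separated, then no set with small boundary splits
`thickSet F r`. -/
theorem card_inter_lt_or_card_sdiff_lt {d : ℕ} (hd : ∀ v, (G.neighborSet v).ncard ≤ d)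
    {s t : Finset (Sym2 V)} (ht : t ⊆ edgeFinset' G) {r k : ℕ}
    (hk : 0 < k) (hV : 0 < Fintype.card V) {η κ : ℝ} {𝒜 : Finset (Finset V)}
    (h𝒜 : ∀ T : Finset V, ∃ A ∈ 𝒜, A ⊆ thickSet s r ∧ (A ∆ (T ∩ thickSet s r)).card ≤
        (d + 1) ^ (2 * r) * (2 * (boundary s T).card))
    (hkη : 2 * (d + 1 : ℝ) ^ (2 * r) / k ≤ η / 2)
    (hkκ : 1 / k + d * (2 * (d + 1 : ℝ) ^ (2 * r) / k) < κ)
    (hgood : ∀ A ∈ 𝒜, η / 2 * Fintype.card V ≤ A.card →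
      η / 2 * Fintype.card V ≤ (thickSet s r \ A).card → ∀ S : Finset V, A ⊆ S →
      Disjoint (thickSet s r \ A) S → κ * Fintype.card V ≤ (boundary t S).card)
    {T : Finset V} (hT : k * (boundary (s ∪ t) T).card ≤ Fintype.card V) :
    ((T ∩ thickSet s r).card : ℝ) < η * Fintype.card V ∨
      ((thickSet s r \ T).card : ℝ) < η * Fintype.card V := by
  by_contra! hcon
  set n : ℝ := (Fintype.card V : ℝ) with hn
  set U := thickSet s r with hU
  have hn0 : 0 < n := by rw [hn]; exact_mod_cast hV
  have hk0 : (0 : ℝ) < k := by exact_mod_cast hk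
  obtain ⟨A, hA, hAU, hAT⟩ := h𝒜 T
  have hb : ((boundary (s ∪ t) T).card : ℝ) ≤ n / k := by
    rw [le_div_iff₀ hk0, mul_comm, hn]
    exact_mod_cast hT
  have hbs : ((boundary s T).card : ℝ) ≤ n / k := by
    refine le_trans ?_ hb
    exact_mod_cast Finset.card_le_card (boundary_mono Finset.subset_union_left T)
  have hbt : ((boundary t T).card : ℝ) ≤ n / k := by
    refine le_trans ?_ hb
    exact_mod_cast Finset.card_le_card (boundary_mono Finset.subset_union_right T)
  set D := A ∆ (T ∩ U) with hD
  have hDc : (D.card : ℝ) ≤ 2 * (d + 1 : ℝ) ^ (2 * r) / k * n := by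
    have h1 : (D.card : ℝ) ≤ (d + 1 : ℝ) ^ (2 * r) * (2 * (boundary s T).card) := by
      exact_mod_cast hAT
    refine h1.trans ?_
    calc (d + 1 : ℝ) ^ (2 * r) * (2 * (boundary s T).card)
        ≤ (d + 1 : ℝ) ^ (2 * r) * (2 * (n / k)) := by gcongr
      _ = _ := by ring
  have hDη : (D.card : ℝ) ≤ η / 2 * n := hDc.trans (mul_le_mul_of_nonneg_right hkη hn0.le)
  have h1 : η / 2 * n ≤ A.card := by
    have h2 : T ∩ U ⊆ A ∪ D := fun x hx => by
      by_cases hxA : x ∈ A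
      · exact Finset.mem_union_left _ hxA
      · exact Finset.mem_union_right _ (Finset.mem_symmDiff.2 (Or.inr ⟨hx, hxA⟩))
    have h3 : ((T ∩ U).card : ℝ) ≤ A.card + D.card := by
      exact_mod_cast (Finset.card_le_card h2).trans (Finset.card_union_le _ _)
    linarith [hcon.1]
  have h2 : η / 2 * n ≤ (U \ A).card := by
    have h2 : U \ T ⊆ (U \ A) ∪ D := fun x hx => by
      rw [Finset.mem_sdiff] at hx
      by_cases hxA : x ∈ A
      · exact Finset.mem_union_right _ (Finset.mem_symmDiff.2
          (Or.inl ⟨hxA, fun h => hx.2 (Finset.mem_inter.1 h).1⟩))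
      · exact Finset.mem_union_left _ (Finset.mem_sdiff.2 ⟨hx.1, hxA⟩)
    have h3 : ((U \ T).card : ℝ) ≤ (U \ A).card + D.card := by
      exact_mod_cast (Finset.card_le_card h2).trans (Finset.card_union_le _ _)
    linarith [hcon.2]
  have h3 := hgood A hA h1 h2 ((T ∪ A) \ (U \ A)) (fun x hx => by simp [hx])
    Finset.disjoint_sdiff
  have h4 : ((T ∪ A) \ (U \ A)) ∆ T ⊆ D := fun x hx => by
    simp only [hD, Finset.mem_symmDiff, Finset.mem_sdiff, Finset.mem_union,
      Finset.mem_inter] at hx ⊢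
    tauto
  have h5 : ((boundary t ((T ∪ A) \ (U \ A))).card : ℝ) ≤ (boundary t T).card + d * D.card := by
    exact_mod_cast (Finset.card_le_card (boundary_subset_union t h4)).trans
      ((Finset.card_union_le _ _).trans (Nat.add_le_add_left (card_incident_le hd ht D) _))
  have h6 : (d : ℝ) * D.card ≤ d * (2 * (d + 1 : ℝ) ^ (2 * r) / k * n) := by gcongr
  have h7 := mul_lt_mul_of_pos_right hkκ hn0
  have h8 : (1 / k + d * (2 * (d + 1 : ℝ) ^ (2 * r) / k)) * n =
    n / k + d * (2 * (d + 1 : ℝ) ^ (2 * r) / k * n) := by ring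
  linarith

end Cells

section Components

set_option linter.unusedSectionVars false

variable {V : Type} [Fintype V] [DecidableEq V] {G H : SimpleGraph V}

theorem mem_compVerts {c : H.ConnectedComponent} {v : V} :
    v ∈ compVerts H c ↔ H.connectedComponentMk v = c := by
  simp [compVerts]

theorem mem_compVerts_of_adj {c : H.ConnectedComponent} {v w : V} (h : H.Adj v w)
    (hv : v ∈ compVerts H c) : w ∈ compVerts H c := by
  rw [mem_compVerts] at hv ⊢
  rw [← hv]
  exact SimpleGraph.ConnectedComponent.connectedComponentMk_eq_of_adj h.symm

theorem exists_adj_of_inter_nonempty {c : H.ConnectedComponent} {W : Finset V}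
    (h1 : (compVerts H c ∩ W).Nonempty) (h2 : ¬ compVerts H c ⊆ W) :
    ∃ a ∈ compVerts H c ∩ W, ∃ b ∈ compVerts H c \ W, H.Adj a b := by
  obtain ⟨u, hu⟩ := h1
  obtain ⟨v, hv, hvW⟩ := Finset.not_subset.1 h2
  have hu' := (Finset.mem_inter.1 hu).1
  have hr : H.Reachable u v := SimpleGraph.ConnectedComponent.eq.1
    ((mem_compVerts.1 hu').trans (mem_compVerts.1 hv).symm)
  obtain ⟨q⟩ := hr
  obtain ⟨a, -, h3, h4⟩ := q.exists_boundary_dart {x | x ∈ compVerts H c ∩ W} hu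
    fun h => hvW (Finset.mem_inter.1 h).2
  have h5 := mem_compVerts_of_adj a.adj (Finset.mem_inter.1 h3).1
  exact ⟨a.fst, h3, a.snd, Finset.mem_sdiff.2 ⟨h5, fun h => h4 (Finset.mem_inter.2 ⟨h5, h⟩)⟩,
    a.adj⟩

theorem eventA_of_isPath {K : SimpleGraph V} (hK : K ≤ H) {x y u : V} (q : K.Walk y u)
    (hq : q.IsPath) (hx : x ∉ q.support) {R : ℕ} (hR : R ≤ q.length + 1) : eventA H R x y := by
  set J := H.deleteEdges {s(x, y)} with hJ
  have h1 : q.support.toFinset ⊆ compVerts J (J.connectedComponentMk y) := by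
    intro w hw
    rw [List.mem_toFinset] at hw
    rw [mem_compVerts, SimpleGraph.ConnectedComponent.eq]
    have h2 : ∀ e ∈ q.edges, e ∈ J.edgeSet := fun e he => by
      have h3 : e ∈ H.edgeSet := SimpleGraph.edgeSet_mono hK (q.edges_subset_edgeSet he)
      rw [hJ, SimpleGraph.edgeSet_deleteEdges]
      refine ⟨h3, fun h4 => hx ?_⟩
      rw [Set.mem_singleton_iff] at h4
      rw [h4] at he
      exact q.fst_mem_support_of_mem_edges he
    have h5 : w ∈ (q.transfer J h2).support := by simpa using hw
    exact ((q.transfer J h2).takeUntil w h5).reachable.symm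
  unfold eventA
  refine le_trans ?_ (Finset.card_le_card h1)
  rw [List.toFinset_card_of_nodup hq.support_nodup, SimpleGraph.Walk.length_support]
  exact hR

theorem exists_long_path {d k : ℕ} (hd : ∀ v, (G.neighborSet v).ncard ≤ d) (hd0 : 0 < d)
    (hk : 0 < k) (hHG : H ≤ G) {y : V}
    (hy : (d + 1) ^ k ≤ (compVerts H (H.connectedComponentMk y)).card) :
    ∃ (u : V) (q : H.Walk y u), q.IsPath ∧ k ≤ q.length := by
  have h1 : ¬ compVerts H (H.connectedComponentMk y) ⊆ grow (edgeFinset' H) (k - 1) {y} := by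
    intro h
    have h2 := (Finset.card_le_card h).trans
      (card_grow_le hd (fun e he => mem_edgeFinset'.2
        (SimpleGraph.edgeSet_mono hHG (mem_edgeFinset'.1 he))) (k - 1) {y})
    rw [Finset.card_singleton, mul_one] at h2
    have h3 : (d + 1) ^ (k - 1) < (d + 1) ^ k := Nat.pow_lt_pow_right (by omega) (by omega)
    omega
  obtain ⟨w, hw, hwg⟩ := Finset.not_subset.1 h1
  rw [mem_compVerts, SimpleGraph.ConnectedComponent.eq] at hw
  obtain ⟨q, hq⟩ := hw.symm.exists_isPath
  refine ⟨w, q, hq, ?_⟩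
  by_contra hlt
  exact hwg (mem_grow_of_walk q (fun e he => mem_edgeFinset'.2 (q.edges_subset_edgeSet he))
    (by omega) q.end_mem_support)

theorem edges_subset_of_fromEdgeSet {F : Finset (Sym2 V)} {K : SimpleGraph V}
    (hK : K ≤ SimpleGraph.fromEdgeSet ↑F) {u v : V} (q : K.Walk u v) :
    ∀ e ∈ q.edges, e ∈ F := fun e he => by
  have := SimpleGraph.edgeSet_mono hK (q.edges_subset_edgeSet he)
  rw [SimpleGraph.edgeSet_fromEdgeSet] at this
  exact this.1

theorem fromEdgeSet_le {F : Finset (Sym2 V)} (hF : F ⊆ edgeFinset' G) :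
    SimpleGraph.fromEdgeSet ↑F ≤ G := fun _ _ h =>
  mem_edgeFinset'.1 (hF ((SimpleGraph.fromEdgeSet_adj _).1 h).1)

theorem extends_of_eventA {d k R : ℕ} (hd : ∀ v, (G.neighborSet v).ncard ≤ d) (hd0 : 0 < d)
    {F : Finset (Sym2 V)} (hF : F ⊆ edgeFinset' G) (hR : (d + 1) ^ k ≤ R) {x y : V}
    (h : eventA (SimpleGraph.fromEdgeSet ↑F) R x y) : Extends G F k x y := by
  rcases Nat.eq_zero_or_pos k with rfl | hk
  · trivial
  set K := (SimpleGraph.fromEdgeSet (F : Set (Sym2 V))).deleteEdges {s(x, y)} with hK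
  have hKF : K ≤ SimpleGraph.fromEdgeSet ↑F := SimpleGraph.deleteEdges_le _
  obtain ⟨u, q, hq, hl⟩ := exists_long_path hd hd0 hk (hKF.trans (fromEdgeSet_le hF))
    (hR.trans h)
  refine extends_of_isPath (hKF.trans (fromEdgeSet_le hF)) q hq
    (edges_subset_of_fromEdgeSet hKF q) ?_ hl
  intro hx
  have hnil : ¬ q.Nil := fun h => by
    rw [← SimpleGraph.Walk.length_eq_zero_iff] at h
    omega
  have h1 := q.adj_snd hnil
  rw [hx, hK, SimpleGraph.deleteEdges_adj] at h1
  exact h1.2 (by simp [Sym2.eq_swap])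

theorem Extends.of_le {s : Finset (Sym2 V)} {r k : ℕ} (hrk : r ≤ k) {x y : V}
    (h : Extends G s k x y) : Extends G s r x y := by
  induction k generalizing r x y with
  | zero =>
    obtain rfl : r = 0 := by omega
    exact h
  | succ k ih =>
    cases r with
    | zero => trivial
    | succ r =>
      obtain ⟨z, h1, h2, h3, h4⟩ := h
      exact ⟨z, h1, h2, h3, ih (by omega) h4⟩

theorem Extends.mem_thickSet {N : ℕ} (hG : NoShortCycle G N) {s : Finset (Sym2 V)} {r k : ℕ}
    (hrk : r ≤ k) (hr : r + 1 ≤ N) {x y : V} (hxy : G.Adj x y) (h : Extends G s k x y) :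
    y ∈ thickSet s r := by
  obtain ⟨u, q, hq, hl, -, he⟩ := (h.of_le hrk).exists_path hG hr hxy
  rw [thickSet, Finset.mem_filter]
  refine ⟨Finset.mem_univ _, ?_⟩
  have h1 : q.support.toFinset ⊆ grow s r {y} := fun w hw =>
    mem_grow_of_walk q he hl.le (List.mem_toFinset.1 hw)
  refine le_trans ?_ (Finset.card_le_card h1)
  rw [List.toFinset_card_of_nodup hq.support_nodup, SimpleGraph.Walk.length_support, hl]

theorem twoCoreComp_le (c : H.ConnectedComponent) : twoCoreComp H c ≤ H :=
  sSup_le fun _ h => h.1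

theorem two_le_ncard_neighborSet_twoCoreComp {c : H.ConnectedComponent} {x y : V}
    (h : (twoCoreComp H c).Adj x y) : 2 ≤ ((twoCoreComp H c).neighborSet x).ncard := by
  obtain ⟨K, hK, hxy⟩ := SimpleGraph.sSup_adj.1 h
  refine (hK.2.2 x ⟨y, hxy⟩).trans (Set.ncard_le_ncard (fun z hz => ?_) (Set.toFinite _))
  exact SimpleGraph.sSup_adj.2 ⟨K, hK, hz⟩

theorem extends_twoCoreComp {c : H.ConnectedComponent} (k : ℕ) {x y : V}
    (h : (twoCoreComp H c).Adj x y) : Extends (twoCoreComp H c) Finset.univ k x y := by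
  induction k generalizing x y with
  | zero => trivial
  | succ k ih =>
    have h1 := two_le_ncard_neighborSet_twoCoreComp h.symm
    obtain ⟨z, hz, hzx⟩ := Set.exists_ne_of_one_lt_ncard h1 x
    exact ⟨z, hzx, hz, Finset.mem_univ _, ih hz⟩

theorem edgeFinset'_twoCoreComp_subset {R N : ℕ} (hH : NoShortCycle H N) (hR0 : 0 < R)
    (hRN : R ≤ N) (c : H.ConnectedComponent) : edgeFinset' (twoCoreComp H c) ⊆ E2set H R := by
  intro e he
  rw [mem_edgeFinset'] at he
  have hA : ∀ x y, (twoCoreComp H c).Adj x y → eventA H R x y := fun x y hxy => by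
    obtain ⟨u, q, hq, hl, hx, -⟩ := (extends_twoCoreComp (R - 1) hxy).exists_path
      (hH.mono (twoCoreComp_le c)) (by omega) hxy
    exact eventA_of_isPath (twoCoreComp_le c) q hq hx (by omega)
  rw [E2set, Finset.mem_filter, mem_edgeFinset']
  refine ⟨SimpleGraph.edgeSet_mono (twoCoreComp_le c) he, ?_⟩
  induction e using Sym2.ind with
  | _ x y => exact ⟨x, y, rfl, hA x y he, hA y x (SimpleGraph.adj_symm _ he)⟩

theorem twoCoreComp_adj_of_not_isBridge {c : H.ConnectedComponent} {x y : V} (hxy : H.Adj x y)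
    (hx : H.connectedComponentMk x = c) (hb : ¬ H.IsBridge s(x, y)) :
    (twoCoreComp H c).Adj x y := by
  rw [SimpleGraph.isBridge_iff_forall_cycle_notMem ((SimpleGraph.mem_edgeSet H).2 hxy)] at hb
  push Not at hb
  obtain ⟨u, q, hq, he⟩ := hb
  have hux : H.connectedComponentMk u = c := by
    rw [← hx, SimpleGraph.ConnectedComponent.eq]
    exact (q.takeUntil x (q.fst_mem_support_of_mem_edges he)).reachable
  have hsupp : ∀ v ∈ q.toSubgraph.spanningCoe.support, v ∈ q.support := fun v hv => by
    obtain ⟨w, hw⟩ := hv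
    exact q.mem_verts_toSubgraph.1 (q.toSubgraph.edge_vert hw)
  refine SimpleGraph.sSup_adj.2 ⟨q.toSubgraph.spanningCoe,
    ⟨q.toSubgraph.spanningCoe_le, fun v hv => ?_, fun v hv => ?_⟩, ?_⟩
  · rw [← hux, SimpleGraph.ConnectedComponent.eq]
    exact (q.takeUntil v (hsupp v hv)).reachable.symm
  · exact (hq.ncard_neighborSet_toSubgraph_eq_two (hsupp v hv)).ge
  · have := q.mem_edges_toSubgraph.2 he
    exact this

theorem card_symmDiff_twoCoreComp_support_le {R N : ℕ} (hH : NoShortCycle H N) (hR0 : 0 < R)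
    (hRN : R ≤ N) (c : H.ConnectedComponent) :
    ((V2set H R) ∆ (Finset.univ.filter (· ∈ (twoCoreComp H c).support))).card ≤
      2 * (E2set H R \ edgeFinset' (twoCoreComp H c)).card := by
  refine le_trans (Finset.card_le_card fun x hx => ?_) (card_filter_mem_le _)
  simp only [Finset.mem_symmDiff, V2set, Finset.mem_filter, Finset.mem_univ, true_and] at hx
  rw [Finset.mem_filter]
  refine ⟨Finset.mem_univ _, ?_⟩
  rcases hx with ⟨⟨e, he, hxe⟩, hx⟩ | ⟨⟨y, hxy⟩, hx⟩
  · refine ⟨e, Finset.mem_sdiff.2 ⟨he, fun h => hx ?_⟩, hxe⟩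
    obtain ⟨y, rfl⟩ := hxe
    exact ⟨y, mem_edgeFinset'.1 h⟩
  · refine absurd ⟨s(x, y), edgeFinset'_twoCoreComp_subset hH hR0 hRN c ?_, by simp⟩ hx
    exact mem_edgeFinset'.2 hxy

end Components

section Pieces

set_option linter.unusedSectionVars false

variable {V : Type} [Fintype V] [DecidableEq V] {G : SimpleGraph V} {F : Finset (Sym2 V)} {k : ℕ}

/-- `S` is connected by edges of `F`, and is joined to its complement by at most one edge of `F`;
if there is such an edge, then `S` has at least `k` vertices. -/
structure IsPiece (F : Finset (Sym2 V)) (k : ℕ) (S : Finset V) : Prop where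
  exists_mem : ∀ W : Finset V, (S ∩ W).Nonempty → ¬ S ⊆ W → ∃ a ∈ S ∩ W, ∃ b ∈ S \ W, s(a, b) ∈ F
  card_boundary_le : (boundary F S).card ≤ 1
  le_card : (boundary F S).Nonempty → k ≤ S.card

theorem mul_card_boundary_biUnion_le {𝒯 : Finset (Finset V)} (h𝒯 : ∀ S ∈ 𝒯, IsPiece F k S) :
    k * (boundary F (𝒯.biUnion id)).card ≤ Fintype.card V := by
  have h1 : ∀ e ∈ boundary F (𝒯.biUnion id), ∃ S ∈ 𝒯, e ∈ boundary F S ∧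
      ∃ x ∈ S, ∃ y, y ∉ 𝒯.biUnion id ∧ e = s(x, y) := by
    intro e he
    obtain ⟨heF, x, hx, y, hy, rfl⟩ := mem_boundary.1 he
    obtain ⟨S, hS, hxS⟩ := Finset.mem_biUnion.1 hx
    exact ⟨S, hS, mem_boundary.2 ⟨heF, x, hxS, y,
      fun h => hy (Finset.mem_biUnion.2 ⟨S, hS, h⟩), rfl⟩, x, hxS, y, hy, rfl⟩
  choose! f hf𝒯 hfb hfx using h1
  have hdisj : (↑(boundary F (𝒯.biUnion id)) : Set (Sym2 V)).PairwiseDisjoint f := by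
    intro e he e' he' hne
    rw [Function.onFun, Finset.disjoint_iff_inter_eq_empty, ← Finset.not_nonempty_iff_eq_empty]
    intro hn
    have heq : ∀ g ∈ boundary F (f e'), g = e' := fun g hg =>
      Finset.card_le_one.1 (h𝒯 _ (hf𝒯 e' he')).card_boundary_le g hg e' (hfb e' he')
    obtain ⟨x, hx, y, hy, hexy⟩ := hfx e he
    obtain ⟨x', hx', y', hy', hexy'⟩ := hfx e' he'
    by_cases hsub : f e ⊆ f e'
    · refine hne (heq e (mem_boundary.2 ⟨(mem_boundary.1 he).1, x, hsub hx, y,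
        fun h => hy (Finset.mem_biUnion.2 ⟨_, hf𝒯 e' he', h⟩), hexy⟩))
    · obtain ⟨a, ha, b, hb, hab⟩ := (h𝒯 _ (hf𝒯 e he)).exists_mem _ hn hsub
      rw [Finset.mem_inter] at ha
      rw [Finset.mem_sdiff] at hb
      have h2 := heq _ (mem_boundary.2 ⟨hab, a, ha.2, b, hb.2, rfl⟩)
      have h3 : y' ∈ s(a, b) := by rw [h2, hexy']; simp
      refine hy' (Finset.mem_biUnion.2 ⟨_, hf𝒯 e he, ?_⟩)
      rcases Sym2.mem_iff.1 h3 with rfl | rfl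
      · exact ha.1
      · exact hb.1
  calc k * (boundary F (𝒯.biUnion id)).card
      = (boundary F (𝒯.biUnion id)).card • k := by rw [smul_eq_mul, mul_comm]
    _ ≤ ∑ e ∈ boundary F (𝒯.biUnion id), (f e).card :=
        Finset.card_nsmul_le_sum _ _ _ fun e he => (h𝒯 _ (hf𝒯 e he)).le_card ⟨e, hfb e he⟩
    _ = ((boundary F (𝒯.biUnion id)).biUnion f).card := (Finset.card_biUnion hdisj).symm
    _ ≤ Fintype.card V := Finset.card_le_univ _

theorem IsPiece.mul_card_boundary_le {S : Finset V} (hS : IsPiece F k S) :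
    k * (boundary F S).card ≤ Fintype.card V := by
  have := mul_card_boundary_biUnion_le (𝒯 := {S}) (by simpa using hS)
  simpa using this

theorem isPiece_compVerts {K : SimpleGraph V} (hK : K ≤ SimpleGraph.fromEdgeSet ↑F)
    {B : Finset (Sym2 V)} (hB : B.card ≤ 1)
    (hKB : ∀ x y, x ≠ y → s(x, y) ∈ F → s(x, y) ∉ B → K.Adj x y) (c : K.ConnectedComponent)
    (hc : B.Nonempty → k ≤ (compVerts K c).card) : IsPiece F k (compVerts K c) := by
  have hsub : boundary F (compVerts K c) ⊆ B := by
    intro e he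
    obtain ⟨heF, x, hx, y, hy, rfl⟩ := mem_boundary.1 he
    by_contra h
    exact hy (mem_compVerts_of_adj (hKB x y (fun h => hy (h ▸ hx)) heF h) hx)
  refine ⟨fun W h1 h2 => ?_, (Finset.card_le_card hsub).trans hB, fun h => hc (h.mono hsub)⟩
  obtain ⟨a, ha, b, hb, hab⟩ := exists_adj_of_inter_nonempty h1 h2
  exact ⟨a, ha, b, hb, ((SimpleGraph.fromEdgeSet_adj _).1 (hK hab)).1⟩

/-- The union of all pieces that meet `U` in fewer than `a` vertices. -/
def smallUnion (F : Finset (Sym2 V)) (k : ℕ) (U : Finset V) (a : ℝ) : Finset V :=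
  (Finset.univ.filter fun S => IsPiece F k S ∧ ((S ∩ U).card : ℝ) < a).biUnion id

theorem subset_smallUnion {U S : Finset V} {a : ℝ} (hS : IsPiece F k S)
    (ha : ((S ∩ U).card : ℝ) < a) : S ⊆ smallUnion F k U a := fun x hx =>
  Finset.mem_biUnion.2 ⟨S, by simpa using ⟨hS, ha⟩, hx⟩

theorem card_smallUnion_inter_lt {U : Finset V} {a : ℝ} (ha : 0 < a)
    (hC : ∀ T : Finset V, k * (boundary F T).card ≤ Fintype.card V →
      ((T ∩ U).card : ℝ) < a ∨ ((U \ T).card : ℝ) < a)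
    (hU : 3 * a ≤ U.card) : ((smallUnion F k U a ∩ U).card : ℝ) < a := by
  have key : ∀ 𝒯 : Finset (Finset V), (∀ S ∈ 𝒯, IsPiece F k S ∧ ((S ∩ U).card : ℝ) < a) →
      ((𝒯.biUnion id ∩ U).card : ℝ) < a := by
    intro 𝒯
    induction 𝒯 using Finset.induction_on with
    | empty => intro _; simpa using ha
    | insert S 𝒯 _ ih =>
      intro h
      have h1 := ih fun S' hS' => h S' (Finset.mem_insert_of_mem hS')
      have h2 := h S (Finset.mem_insert_self _ _)
      rcases hC _ (mul_card_boundary_biUnion_le fun S' hS' => (h S' hS').1) with h3 | h3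
      · exact h3
      exfalso
      have h4 : U ⊆ (S ∩ U) ∪ (𝒯.biUnion id ∩ U) ∪ (U \ (insert S 𝒯).biUnion id) := by
        intro x hx
        simp only [Finset.mem_union, Finset.mem_inter, Finset.mem_sdiff, Finset.biUnion_insert, id]
        tauto
      have h5 := (Finset.card_le_card h4).trans
        ((Finset.card_union_le _ _).trans (Nat.add_le_add_right (Finset.card_union_le _ _) _))
      have h6 : (U.card : ℝ) ≤ ((S ∩ U).card + (𝒯.biUnion id ∩ U).card : ℝ) +
        (U \ (insert S 𝒯).biUnion id).card := by exact_mod_cast h5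
      linarith
  exact key _ fun S hS => by simpa using hS

theorem card_compVerts_sdiff_le {d : ℕ} (hd : ∀ v, (G.neighborSet v).ncard = d) (hd2 : 2 ≤ d)
    (hF : F ⊆ edgeFinset' G) (hk : 0 < k) {U : Finset V} {β : ℝ}
    (hkβ : ((d : ℝ) + 1) ^ k ≤ β)
    (hB : (((darts G).filter fun z => Extends G F k z.1 z.2 ∧ z.2 ∉ U).card : ℝ) ≤ β)
    (c : (SimpleGraph.fromEdgeSet (F : Set (Sym2 V))).ConnectedComponent) :
    ((compVerts _ c \ U).card : ℝ) ≤ β := by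
  rcases lt_or_ge (compVerts _ c).card ((d + 1) ^ k) with hlt | hge
  · refine le_trans ?_ hkβ
    have := (Finset.card_le_card (Finset.sdiff_subset (s := compVerts _ c) (t := U))).trans hlt.le
    exact_mod_cast this
  · refine le_trans ?_ hB
    norm_cast
    refine le_trans (Finset.card_le_card ?_) (Finset.card_image_le (f := Prod.snd))
    intro v hv
    rw [Finset.mem_sdiff, mem_compVerts] at hv
    obtain ⟨hvc, hvU⟩ := hv
    obtain ⟨u, q, hq, hl⟩ := exists_long_path (fun v => (hd v).le) (by omega) hk
      (fromEdgeSet_le hF) (y := v) (by rw [hvc]; exact hge)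
    obtain ⟨x, hx, hxq⟩ := Set.exists_ne_of_one_lt_ncard
      (s := G.neighborSet v) (by rw [hd v]; omega) q.snd
    refine Finset.mem_image.2 ⟨(x, v), Finset.mem_filter.2 ⟨mem_darts.2 (G.adj_symm hx), ?_, hvU⟩, rfl⟩
    exact extends_of_isPath (fromEdgeSet_le hF) q hq (edges_subset_of_fromEdgeSet le_rfl q)
      hxq.symm hl

theorem card_sdiff_compVerts_lt {d : ℕ} (hd : ∀ v, (G.neighborSet v).ncard = d) (hd2 : 2 ≤ d)
    (hF : F ⊆ edgeFinset' G) (hk : 0 < k) {U : Finset V} {a β : ℝ} (ha : 0 < a) (hβ : β ≤ a)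
    (hkβ : ((d : ℝ) + 1) ^ k ≤ β)
    (hB : (((darts G).filter fun z => Extends G F k z.1 z.2 ∧ z.2 ∉ U).card : ℝ) ≤ β)
    (hC : ∀ T : Finset V, k * (boundary F T).card ≤ Fintype.card V →
      ((T ∩ U).card : ℝ) < a ∨ ((U \ T).card : ℝ) < a) (hU : 3 * a ≤ U.card)
    {c : (SimpleGraph.fromEdgeSet (F : Set (Sym2 V))).ConnectedComponent}
    (hc : IsLargestComp _ c) : ((U \ compVerts _ c).card : ℝ) < a := by
  have hpiece : ∀ c' : (SimpleGraph.fromEdgeSet (F : Set (Sym2 V))).ConnectedComponent,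
      IsPiece F k (compVerts _ c') := fun c' =>
    isPiece_compVerts le_rfl (B := ∅) (by simp)
      (fun x y hxy h _ => (SimpleGraph.fromEdgeSet_adj _).2 ⟨h, hxy⟩) c' (by simp)
  rcases hC _ (hpiece c).mul_card_boundary_le with h1 | h1
  swap
  · exact h1
  exfalso
  have h2 : ((compVerts _ c).card : ℝ) < 2 * a := by
    have h3 := card_compVerts_sdiff_le hd hd2 hF hk hkβ hB c
    have h4 : ((compVerts _ c).card : ℝ) = (compVerts _ c ∩ U).card + (compVerts _ c \ U).card := by
      exact_mod_cast (Finset.card_inter_add_card_sdiff _ _).symm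
    linarith
  have h3 : U ⊆ smallUnion F k U a ∩ U := by
    intro v hv
    refine Finset.mem_inter.2 ⟨?_, hv⟩
    set c' := (SimpleGraph.fromEdgeSet (F : Set (Sym2 V))).connectedComponentMk v with hc'
    refine subset_smallUnion (hpiece c') ?_ (mem_compVerts.2 hc'.symm)
    rcases hC _ (hpiece c').mul_card_boundary_le with h4 | h4
    · exact h4
    exfalso
    have h5 : ((compVerts _ c').card : ℝ) ≤ (compVerts _ c).card := by exact_mod_cast hc c'
    have h6 : (U.card : ℝ) ≤ (U \ compVerts _ c').card + (compVerts _ c').card := by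
      exact_mod_cast Finset.card_le_card_sdiff_add_card
    linarith
  have h4 := card_smallUnion_inter_lt ha hC hU
  have h5 : (U.card : ℝ) ≤ (smallUnion F k U a ∩ U).card := by
    exact_mod_cast Finset.card_le_card h3
  linarith

theorem disjoint_compVerts_of_isBridge {H : SimpleGraph V} {x y : V} (hb : H.IsBridge s(x, y)) :
    Disjoint (compVerts (H.deleteEdges {s(x, y)}) ((H.deleteEdges {s(x, y)}).connectedComponentMk x))
      (compVerts (H.deleteEdges {s(x, y)})
        ((H.deleteEdges {s(x, y)}).connectedComponentMk y)) := by
  rw [Finset.disjoint_left]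
  intro v hx hy
  rw [mem_compVerts] at hx hy
  rw [SimpleGraph.isBridge_iff] at hb
  refine hb ?_
  have := SimpleGraph.ConnectedComponent.eq.1 (hx.symm.trans hy)
  exact this

theorem mem_smallUnion_of_isBridge {R : ℕ} (hkR : k ≤ R) {U : Finset V} {a : ℝ}
    (hC : ∀ T : Finset V, k * (boundary F T).card ≤ Fintype.card V →
      ((T ∩ U).card : ℝ) < a ∨ ((U \ T).card : ℝ) < a) {x y : V}
    (hb : (SimpleGraph.fromEdgeSet (F : Set (Sym2 V))).IsBridge s(x, y))
    (hxy : eventA (SimpleGraph.fromEdgeSet ↑F) R x y)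
    (hyx : eventA (SimpleGraph.fromEdgeSet ↑F) R y x) :
    x ∈ smallUnion F k U a ∨ y ∈ smallUnion F k U a := by
  have hpiece : ∀ c, k ≤ (compVerts ((SimpleGraph.fromEdgeSet (F : Set (Sym2 V))).deleteEdges
      {s(x, y)}) c).card → IsPiece F k (compVerts _ c) := fun c hc =>
    isPiece_compVerts (SimpleGraph.deleteEdges_le _) (B := {s(x, y)}) (by simp)
      (fun v w hvw h h' => by
        rw [SimpleGraph.deleteEdges_adj]
        exact ⟨(SimpleGraph.fromEdgeSet_adj _).2 ⟨h, hvw⟩, by simpa using h'⟩) c (fun _ => hc)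
  have hdisj := disjoint_compVerts_of_isBridge hb
  unfold eventA at hxy hyx
  rw [Sym2.eq_swap] at hyx
  have hpx := hpiece _ (hkR.trans hyx)
  have hpy := hpiece _ (hkR.trans hxy)
  rcases hC _ hpy.mul_card_boundary_le with h | h
  · exact Or.inr (subset_smallUnion hpy h (mem_compVerts.2 rfl))
  · refine Or.inl (subset_smallUnion hpx (lt_of_le_of_lt ?_ h) (mem_compVerts.2 rfl))
    norm_cast
    refine Finset.card_le_card fun v hv => ?_
    rw [Finset.mem_inter] at hv
    exact Finset.mem_sdiff.2 ⟨hv.2, Finset.disjoint_left.1 hdisj hv.1⟩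

theorem card_E2set_sdiff_twoCoreComp_le {d R : ℕ} (hd : ∀ v, (G.neighborSet v).ncard = d)
    (hd2 : 2 ≤ d) (hF : F ⊆ edgeFinset' G) (hk : 0 < k) (hR : (d + 1) ^ k ≤ R) {U : Finset V}
    {a β : ℝ} (ha : 0 < a) (hβ : β ≤ a) (hkβ : ((d : ℝ) + 1) ^ k ≤ β)
    (hB : (((darts G).filter fun z => Extends G F k z.1 z.2 ∧ z.2 ∉ U).card : ℝ) ≤ β)
    (hC : ∀ T : Finset V, k * (boundary F T).card ≤ Fintype.card V →
      ((T ∩ U).card : ℝ) < a ∨ ((U \ T).card : ℝ) < a)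
    {H : SimpleGraph V} (hH : H = SimpleGraph.fromEdgeSet ↑F) {c : H.ConnectedComponent}
    (hc : IsLargestComp H c) :
    ((E2set H R \ edgeFinset' (twoCoreComp H c)).card : ℝ) ≤ β + 3 * d * a := by
  have hd' : ∀ v, (G.neighborSet v).ncard ≤ d := fun v => (hd v).le
  set 𝒟 := ((darts G).filter fun z => Extends G F k z.1 z.2 ∧ z.2 ∉ U).image
    fun z => s(z.1, z.2) with h𝒟
  have h𝒟β : (𝒟.card : ℝ) ≤ β := le_trans (by exact_mod_cast Finset.card_image_le) hB
  have hinc : ∀ W : Finset V, ((incident F W).card : ℝ) ≤ d * W.card := fun W => by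
    exact_mod_cast card_incident_le hd' hF W
  have hedge : ∀ x y, H.Adj x y → s(x, y) ∈ F := fun x y h =>
    ((SimpleGraph.fromEdgeSet_adj _).1 (hH ▸ h)).1
  have hmem𝒟 : ∀ x y, H.Adj x y → eventA H R x y → y ∉ U → s(x, y) ∈ 𝒟 := by
    intro x y hxy hA hy
    refine Finset.mem_image.2 ⟨(x, y), Finset.mem_filter.2 ⟨mem_darts.2 (fromEdgeSet_le hF (hH ▸ hxy)),
      extends_of_eventA hd' (by omega) hF hR (hH ▸ hA), hy⟩, rfl⟩
  have hd0 : (0 : ℝ) ≤ d := Nat.cast_nonneg d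
  rcases lt_or_ge (U.card : ℝ) (3 * a) with hU | hU
  · have hsub : E2set H R \ edgeFinset' (twoCoreComp _ c) ⊆ 𝒟 ∪ incident F U := by
      intro e he
      have he2 := (Finset.mem_sdiff.1 he).1
      rw [E2set, Finset.mem_filter, mem_edgeFinset'] at he2
      obtain ⟨heH, x, y, rfl, hxy, -⟩ := he2
      rw [Finset.mem_union]
      by_cases hy : y ∈ U
      · exact Or.inr (mem_incident.2 ⟨hedge x y heH, y, hy, by simp⟩)
      · exact Or.inl (hmem𝒟 x y heH hxy hy)
    have h1 : ((E2set H R \ edgeFinset' (twoCoreComp _ c)).card : ℝ) ≤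
        𝒟.card + (incident F U).card := by
      exact_mod_cast (Finset.card_le_card hsub).trans (Finset.card_union_le _ _)
    have h2 := hinc U
    nlinarith [mul_le_mul_of_nonneg_left hU.le hd0]
  · have hT := card_smallUnion_inter_lt ha hC hU
    have hCc : ((U \ compVerts H c).card : ℝ) < a := by
      subst hH
      exact card_sdiff_compVerts_lt hd hd2 hF hk ha hβ hkβ hB hC hU hc
    have hsub : E2set H R \ edgeFinset' (twoCoreComp _ c) ⊆
        𝒟 ∪ (incident F (smallUnion F k U a ∩ U) ∪ incident F (U \ compVerts H c)) := by
      intro e he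
      obtain ⟨he2, hcore⟩ := Finset.mem_sdiff.1 he
      rw [E2set, Finset.mem_filter, mem_edgeFinset'] at he2
      obtain ⟨heH, x, y, rfl, hxy, hyx⟩ := he2
      have hadj : H.Adj x y := heH
      rw [Finset.mem_union, Finset.mem_union]
      by_cases hy : y ∈ U
      swap
      · exact Or.inl (hmem𝒟 x y hadj hxy hy)
      by_cases hx : x ∈ U
      swap
      · left
        rw [Sym2.eq_swap]
        exact hmem𝒟 y x hadj.symm hyx hx
      right
      have hexy := hedge x y hadj
      by_cases hb : H.IsBridge s(x, y)
      · left
        have hk2 : k ≤ R := (Nat.lt_pow_self (by omega)).le.trans hR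
        rcases mem_smallUnion_of_isBridge hk2 hC (hH ▸ hb) (hH ▸ hxy) (hH ▸ hyx) with h | h
        · exact mem_incident.2 ⟨hexy, x, Finset.mem_inter.2 ⟨h, hx⟩, by simp⟩
        · exact mem_incident.2 ⟨hexy, y, Finset.mem_inter.2 ⟨h, hy⟩, by simp⟩
      · right
        refine mem_incident.2 ⟨hexy, x, Finset.mem_sdiff.2 ⟨hx, fun h => hcore ?_⟩, by simp⟩
        exact mem_edgeFinset'.2
          (twoCoreComp_adj_of_not_isBridge hadj (mem_compVerts.1 h) hb)
    have h1 : ((E2set H R \ edgeFinset' (twoCoreComp _ c)).card : ℝ) ≤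
        𝒟.card + ((incident F (smallUnion F k U a ∩ U)).card +
          (incident F (U \ compVerts H c)).card) := by
      exact_mod_cast (Finset.card_le_card hsub).trans ((Finset.card_union_le _ _).trans
        (Nat.add_le_add_left (Finset.card_union_le _ _) _))
    have h2 := hinc (smallUnion F k U a ∩ U)
    have h3 := hinc (U \ compVerts H c)
    nlinarith [mul_le_mul_of_nonneg_left hT.le hd0, mul_le_mul_of_nonneg_left hCc.le hd0,
      mul_nonneg hd0 ha.le]

end Pieces

section Sprinkling

set_option linter.unusedSectionVars false

theorem exists_prob_split_le {b : ℝ} (hb : 0 < b) {d : ℕ} (hd : 0 < d) {η δ : ℝ}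
    (hη : 0 < η) (hδ0 : 0 < δ) (hδ1 : δ ≤ 1) :
    ∃ r k₀ : ℕ, 0 < k₀ ∧ ∃ c > 0, ∀ k ≥ k₀, ∀ (V : Type) [Fintype V] [DecidableEq V]
      (G : SimpleGraph V), IsExpander G b d → 0 < Fintype.card V → ∀ s ⊆ edgeFinset' G,
        prob (edgeFinset' G) δ (fun t => ∃ T : Finset V,
          k * (boundary (s ∪ t) T).card ≤ Fintype.card V ∧
          η * Fintype.card V ≤ ((T ∩ thickSet s r).card : ℝ) ∧
          η * Fintype.card V ≤ ((thickSet s r \ T).card : ℝ)) ≤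
            Real.exp (-(c * Fintype.card V)) := by
  obtain ⟨κ, hκ, c₀, hc₀, hcut⟩ := exists_prob_boundary_lt_le hb hd (half_pos hη) hδ0 hδ1
  obtain ⟨r, hr⟩ := exists_nat_gt (Real.log 2 / (c₀ / 2))
  rw [div_lt_iff₀ (by positivity)] at hr
  set M : ℝ := 2 * (d + 1 : ℝ) ^ (2 * r) with hM
  have hM0 : 0 < M := by positivity
  obtain ⟨k₀, hk₀⟩ := exists_nat_gt (max (M / (η / 2)) ((1 + d * M) / κ))
  have hk₀pos : (0 : ℝ) < k₀ := lt_of_le_of_lt (by positivity) hk₀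
  refine ⟨r, k₀, by exact_mod_cast hk₀pos, c₀ / 2, half_pos hc₀, ?_⟩
  intro k hk V _ _ G hG hV s hs
  have hkk : (k₀ : ℝ) ≤ k := by exact_mod_cast hk
  have hk0 : (0 : ℝ) < k := hk₀pos.trans_le hkk
  have hkη : M / k ≤ η / 2 := by
    rw [div_le_iff₀ hk0, mul_comm]
    exact (div_le_iff₀ (half_pos hη)).1 (((le_max_left _ _).trans hk₀.le).trans hkk)
  have hkκ : 1 / k + d * (M / k) < κ := by
    have : (1 : ℝ) / k + d * (M / k) = (1 + d * M) / k := by field_simp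
    rw [this, div_lt_iff₀ hk0, mul_comm κ]
    exact (div_lt_iff₀ hκ).1 (((le_max_right _ _).trans_lt hk₀).trans_le hkk)
  obtain ⟨𝒜, ⟨m, h𝒜m, hm⟩, h𝒜⟩ := exists_approx_family hG.1 hs r
  set n : ℝ := (Fintype.card V : ℝ) with hn
  set 𝒜' := 𝒜.filter fun A => η / 2 * n ≤ A.card ∧ η / 2 * n ≤ (thickSet s r \ A).card with h𝒜'
  have h1 : prob (edgeFinset' G) δ (fun t => ∃ T : Finset V,
      k * (boundary (s ∪ t) T).card ≤ Fintype.card V ∧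
      η * n ≤ ((T ∩ thickSet s r).card : ℝ) ∧ η * n ≤ ((thickSet s r \ T).card : ℝ)) ≤
      prob (edgeFinset' G) δ (fun t => ∃ A ∈ 𝒜', ∃ S : Finset V, A ⊆ S ∧
        Disjoint (thickSet s r \ A) S ∧ ((boundary t S).card : ℝ) < κ * n) := by
    refine prob_mono hδ0.le hδ1 ?_
    rintro t ht ⟨T, hT, hT1, hT2⟩
    by_contra! hcon
    rcases card_inter_lt_or_card_sdiff_lt hG.1 ht (by exact_mod_cast hk0) hV h𝒜 hkη hkκ
      (fun A hA hA1 hA2 => hcon A (Finset.mem_filter.2 ⟨hA, hA1, hA2⟩)) hT with h | h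
    · exact h.not_ge hT1
    · exact h.not_ge hT2
  refine h1.trans ((prob_exists_le hδ0.le hδ1 _ _).trans ?_)
  have h2 : ∀ A ∈ 𝒜', prob (edgeFinset' G) δ (fun t => ∃ S : Finset V, A ⊆ S ∧
      Disjoint (thickSet s r \ A) S ∧ ((boundary t S).card : ℝ) < κ * n) ≤
      Real.exp (-(c₀ * n)) := fun A hA => by
    rw [h𝒜', Finset.mem_filter] at hA
    exact hcut V G hG hV A _ Finset.sdiff_disjoint hA.2.1 hA.2.2
  refine (Finset.sum_le_sum h2).trans ?_
  rw [Finset.sum_const, nsmul_eq_mul]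
  have h3 : (𝒜'.card : ℝ) ≤ Real.exp (Real.log 2 * m) := by
    rw [Real.exp_mul, Real.exp_log two_pos, Real.rpow_natCast]
    exact_mod_cast (Finset.card_filter_le _ _).trans h𝒜m
  have h4 : (m : ℝ) * (r + 1) ≤ n := by rw [hn]; exact_mod_cast hm
  have h5 : Real.log 2 * m ≤ c₀ / 2 * n := by
    have h6 : Real.log 2 * m ≤ ((r + 1 : ℝ) * (c₀ / 2)) * m :=
      mul_le_mul_of_nonneg_right (by linarith) (Nat.cast_nonneg m)
    nlinarith [mul_le_mul_of_nonneg_left h4 (half_pos hc₀).le]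
  refine (mul_le_mul_of_nonneg_right h3 (Real.exp_pos _).le).trans ?_
  rw [← Real.exp_add, Real.exp_le_exp]
  linarith

variable {V : Type} [Fintype V] [DecidableEq V] {G : SimpleGraph V}

theorem card_extends_notMem_thickSet_le {N : ℕ} (hG : NoShortCycle G N)
    {s t : Finset (Sym2 V)} {r k : ℕ} (hst : s ⊆ t) (hrk : r ≤ k) (hr : r + 1 ≤ N) :
    (((darts G).filter fun z => Extends G t k z.1 z.2 ∧ z.2 ∉ thickSet s r).card : ℝ) ≤
      extendCount G k t - extendCount G k s := by
  unfold extendCount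
  rw [Finset.card_filter, ← Finset.sum_sub_distrib]
  push_cast
  refine Finset.sum_le_sum fun z hz => ?_
  by_cases h1 : Extends G s k z.1 z.2
  · have h2 := h1.mono hst
    have h3 := h1.mem_thickSet hG hrk hr (mem_darts.1 hz)
    simp [h1, h2, h3]
  · by_cases h2 : Extends G t k z.1 z.2
    · simp only [h1, h2, if_true, if_false, true_and, sub_zero]
      split_ifs <;> norm_num
    · simp [h1, h2]

theorem prob_union_le {α : Type*} [DecidableEq α] {E : Finset α} {p q u v w : ℝ} (hp0 : 0 ≤ p)
    (hp1 : p ≤ 1) (hq0 : 0 ≤ q) (hq1 : q ≤ 1) {B P Q : Finset α → Prop}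
    {S : Finset α → Finset α → Prop}
    (h : ∀ s ⊆ E, ∀ t ⊆ E, B (s ∪ t) → P (s ∪ t) ∨ Q s ∨ S s t)
    (hP : prob E (p + q - p * q) P ≤ u) (hQ : prob E p Q ≤ v)
    (hS : ∀ s ⊆ E, prob E q (S s) ≤ w) : prob E (p + q - p * q) B ≤ u + v + w := by
  have h1 : prob E (p + q - p * q) B ≤ expect E p (fun s =>
      expect E q (fun t => if P (s ∪ t) then 1 else 0) + (if Q s then 1 else 0) + w) := by
    rw [prob, expect_union]
    refine expect_mono hp0 hp1 fun s hs => ?_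
    have h2 : expect E q (fun t => if B (s ∪ t) then 1 else 0) ≤ expect E q (fun t =>
        ((if P (s ∪ t) then 1 else 0) + (if Q s then 1 else 0)) + (if S s t then 1 else 0)) := by
      refine expect_mono hq0 hq1 fun t ht => ?_
      have h3 := h s hs t ht
      by_cases hB : B (s ∪ t)
      · rcases h3 hB with h4 | h4 | h4 <;> simp only [hB, h4, if_true] <;> split_ifs <;> norm_num
      · rw [if_neg hB]
        split_ifs <;> norm_num
    rw [expect_add, expect_add, expect_const] at h2
    have h3 := hS s hs
    unfold prob at h3
    linarith
  rw [expect_add, expect_add, expect_const,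
    ← expect_union E p q (fun s => if P s then 1 else 0)] at h1
  unfold prob at hP hQ h1 ⊢
  linarith

theorem noShortCycle_of_lt_girth {N : ℕ} (h : N < G.girth) : NoShortCycle G N :=
  fun _ _ hc => h.trans_le (SimpleGraph.girth_le_length hc)

theorem lt_card_of_lt_girth {N : ℕ} (h : N < G.girth) : N < Fintype.card V := by
  have h1 : ¬ G.IsAcyclic := fun hG => by
    rw [hG.girth_eq_zero] at h
    omega
  obtain ⟨v, c, hc, hl⟩ := SimpleGraph.exists_girth_eq_length.2 h1
  have h2 := hc.support_nodup.length_le_card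
  rw [List.length_tail, SimpleGraph.Walk.length_support] at h2
  omega

theorem card_forward {d : ℕ} (hd : ∀ v, (G.neighborSet v).ncard = d) {x y : V} (hxy : G.Adj x y) :
    (forward G x y).card = d - 1 := by
  have h1 : forward G x y = (G.neighborSet y).toFinset.erase x := by
    ext z
    simp [mem_forward]
  rw [h1, Finset.card_erase_of_mem (by simpa using hxy.symm), ← Set.ncard_eq_toFinset_card', hd y]

theorem percProb_mono {p : ℝ} (h0 : 0 ≤ p) (h1 : p ≤ 1) {P Q : SimpleGraph V → Prop}
    (h : ∀ H ≤ G, P H → Q H) : percProb G p P ≤ percProb G p Q :=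
  prob_mono (E := edgeFinset' G) (P := fun F => P (SimpleGraph.fromEdgeSet ↑F))
    (Q := fun F => Q (SimpleGraph.fromEdgeSet ↑F)) h0 h1
    fun _ hF => h _ (fromEdgeSet_le hF)

theorem three_mul_exp_le {c n : ℝ} (h : 4 ≤ c * n) :
    Real.exp (-(c * n)) + Real.exp (-(c * n)) + Real.exp (-(c * n)) ≤ Real.exp (-(c / 2) * n) := by
  have h1 : (3 : ℝ) ≤ Real.exp (c / 2 * n) := by
    have := Real.add_one_le_exp (c / 2 * n)
    linarith
  have h2 : Real.exp (-(c / 2) * n) = Real.exp (c / 2 * n) * Real.exp (-(c * n)) := by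
    rw [← Real.exp_add]
    congr 1
    ring
  rw [h2]
  nlinarith [Real.exp_pos (-(c * n))]

theorem exists_prob_E2set_sdiff_le {d : ℕ} (hd : 3 ≤ d) {p : ℝ} (hp : 1 / ((d : ℝ) - 1) < p)
    (hp1 : p < 1) {ε b : ℝ} (hε : 0 < ε) (hb : 0 < b) :
    ∃ R : ℕ, 0 < R ∧ ∃ c > (0 : ℝ), ∀ (V : Type) [Fintype V] [DecidableEq V] (G : SimpleGraph V),
      IsRegularExpander G b d → 2 * R < G.girth →
        percProb G p (fun H => ∃ c₁ : H.ConnectedComponent, IsLargestComp H c₁ ∧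
          ε * Fintype.card V < ((E2set H R \ edgeFinset' (twoCoreComp H c₁)).card : ℝ)) ≤
          Real.exp (-c * Fintype.card V) := by
  have hd3 : (3 : ℝ) ≤ d := by exact_mod_cast hd
  have hd0 : (0 : ℝ) < d := by linarith
  have hp0 : 0 < p := lt_trans (by apply one_div_pos.2; linarith) hp
  have hmp : 1 < ((d - 1 : ℕ) : ℝ) * p := by
    rw [Nat.cast_sub (by omega), Nat.cast_one]
    rw [div_lt_iff₀ (by linarith)] at hp
    linarith
  set η := ε / (6 * d) with hη
  have hη0 : 0 < η := by positivity
  have hηε : η + 3 * d * η ≤ ε := by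
    have h1 : 6 * d * η = ε := by rw [hη]; field_simp
    nlinarith
  obtain ⟨p', hp'0, hp'p, hsurv⟩ := exists_survival_sub_le (m := d - 1) (by omega) hmp hp1
    (ε := η / (3 * d)) (by positivity)
  set δ := (p - p') / (1 - p') with hδ
  have h1p' : 0 < 1 - p' := by linarith
  have hδ0 : 0 < δ := div_pos (by linarith) h1p'
  have hδ1 : δ ≤ 1 := (div_le_one h1p').2 (by linarith)
  have hpδ : p' + δ - p' * δ = p := by
    rw [hδ]; field_simp; ring
  obtain ⟨r, k₀, hk₀, c₀, hc₀, hsplit⟩ := exists_prob_split_le hb (d := d) (by omega) hη0 hδ0 hδ1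
  set k := max k₀ r with hk
  have hkpos : 0 < k := hk₀.trans_le (le_max_left _ _)
  set L : ℝ := influence d k + 1 with hL
  have hL0 : 0 < L := by positivity
  set c := min c₀ (η ^ 2 / (36 * L ^ 2 * d)) with hc
  have hc0 : 0 < c := lt_min hc₀ (by positivity)
  obtain ⟨R, hR⟩ := exists_nat_gt (max ((d + 1 : ℝ) ^ k) (max ((d + 1 : ℝ) ^ k / η) (2 / c)))
  have hR1 : (d + 1) ^ k ≤ R := by
    have := ((le_max_left _ _).trans_lt hR).le
    exact_mod_cast this
  have hR2 : (d + 1 : ℝ) ^ k ≤ η * R := by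
    have h1 := (((le_max_left _ _).trans (le_max_right _ _)).trans_lt hR).le
    rwa [div_le_iff₀ hη0, mul_comm] at h1
  have hR3 : 2 ≤ c * R := by
    have h1 := (((le_max_right _ _).trans (le_max_right _ _)).trans_lt hR).le
    rwa [div_le_iff₀ hc0, mul_comm] at h1
  have hkR : k + 1 ≤ R := (Nat.lt_pow_self (by omega)).trans_le hR1
  refine ⟨R, by omega, c / 2, half_pos hc0, ?_⟩
  intro V _ _ G hG hgirth
  have hcyc := noShortCycle_of_lt_girth hgirth
  have hnR := lt_card_of_lt_girth hgirth
  obtain ⟨hexp, hreg⟩ := hG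
  have hdeg := hexp.1
  set n : ℝ := (Fintype.card V : ℝ) with hn
  have hRn : 2 * (R : ℝ) ≤ n := by rw [hn]; exact_mod_cast hnR.le
  have hR0 : (0 : ℝ) ≤ R := Nat.cast_nonneg R
  have hn0 : 0 < n := by rw [hn]; exact_mod_cast (by omega : 0 < Fintype.card V)
  have hinf : ∀ s a, |extendCount G k (insert a s) - extendCount G k s| ≤ L := fun s a =>
    (abs_extendCount_insert_sub_le hdeg k s a).trans (by rw [hL]; linarith)
  have hE : ((edgeFinset' G).card : ℝ) ≤ d * n := by
    rw [hn]; exact_mod_cast card_edgeFinset'_le hdeg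
  have hD : ((darts G).card : ℝ) ≤ d * n := by
    rw [hn]; exact_mod_cast card_darts_le hdeg
  have hexpect : ∀ q, expect (edgeFinset' G) q (extendCount G k) =
      (darts G).card * survival (d - 1) q k := fun q =>
    expect_extendCount hcyc (fun x y h => card_forward hreg h) q (by omega)
  have hrate : Real.exp (-((η * n / 3) ^ 2 / (4 * L ^ 2 * (d * n)))) ≤ Real.exp (-(c * n)) := by
    rw [Real.exp_le_exp, neg_le_neg_iff]
    have h1 : (η * n / 3) ^ 2 / (4 * L ^ 2 * (d * n)) = η ^ 2 / (36 * L ^ 2 * d) * n := by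
      field_simp; ring
    rw [h1]
    exact mul_le_mul_of_nonneg_right (min_le_right _ _) hn0.le
  have hcn : 4 ≤ c * n := by linarith [mul_le_mul_of_nonneg_left hRn hc0.le]
  have hkn : (d + 1 : ℝ) ^ k ≤ η * n := by
    linarith [mul_le_mul_of_nonneg_left hRn hη0.le, mul_nonneg hη0.le hR0]
  have hεn : η * n + 3 * d * (η * n) ≤ ε * n := by
    linarith [mul_le_mul_of_nonneg_right hηε hn0.le]
  refine le_trans ?_ (three_mul_exp_le hcn)
  rw [← hpδ]
  refine prob_union_le (E := edgeFinset' G) hp'0.le (by linarith) hδ0.le hδ1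
    (P := fun s => expect (edgeFinset' G) p (extendCount G k) + η * n / 3 ≤ extendCount G k s)
    (Q := fun s => extendCount G k s ≤ expect (edgeFinset' G) p' (extendCount G k) - η * n / 3)
    ?_ ?_ ?_ fun s hs => (hsplit k (le_max_left _ _) V G hexp (by omega) s hs).trans ?_
  · rintro s hs t ht ⟨c₁, hc₁, hlt⟩
    by_contra! hcon
    obtain ⟨hP, hQ, hS⟩ := hcon
    refine hlt.not_ge (le_trans (card_E2set_sdiff_twoCoreComp_le (U := thickSet s r) (a := η * n)
      (β := η * n) hreg (by omega) (Finset.union_subset hs ht) hkpos hR1 (by positivity) le_rfl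
      hkn ?_ ?_ rfl hc₁) hεn)
    · refine (card_extends_notMem_thickSet_le hcyc Finset.subset_union_left (le_max_right _ _)
        (by omega)).trans ?_
      rw [hexpect] at hP hQ
      have h1 : ((darts G).card : ℝ) * (survival (d - 1) p k - survival (d - 1) p' k) ≤
          η * n / 3 := by
        calc _ ≤ ((darts G).card : ℝ) * (η / (3 * d)) :=
              mul_le_mul_of_nonneg_left (hsurv k) (Nat.cast_nonneg _)
          _ ≤ d * n * (η / (3 * d)) := mul_le_mul_of_nonneg_right hD (by positivity)
          _ = η * n / 3 := by field_simp
      linarith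
    · intro T hT
      by_contra! h
      exact (hS T hT h.1).not_ge h.2
  · rw [hpδ]
    exact (prob_upper_tail _ hp0.le hp1.le hL0 (by positivity) hE (by positivity) hinf).trans hrate
  · exact (prob_lower_tail _ hp'0.le (by linarith) hL0 (by positivity) hE (by positivity)
      hinf).trans hrate
  · rw [Real.exp_le_exp, neg_le_neg_iff]
    exact mul_le_mul_of_nonneg_right (min_le_left _ _) hn0.le

end Sprinkling

theorem E2_V2_approximate_two_core (d : ℕ) (hd : 3 ≤ d) (p : ℝ)
    (hp : 1 / ((d : ℝ) - 1) < p) (hp1 : p < 1)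
    (ε b : ℝ) (hε : 0 < ε) (hb : 0 < b) :
    ∃ R : ℕ, 0 < R ∧ ∃ c > (0:ℝ),
      ∀ (V : Type) [Fintype V] [DecidableEq V] (G : SimpleGraph V),
        IsRegularExpander G b d → ((2 * R : ℕ) : ℕ∞) < G.girth →
        percProb G p (fun H =>
            ∃ c₁ : H.ConnectedComponent, IsLargestComp H c₁ ∧
              ε * Fintype.card V <
                (((E2set H R) ∆ (edgeFinset' (twoCoreComp H c₁))).card : ℝ))
          ≤ Real.exp (-c * Fintype.card V) ∧
        percProb G p (fun H =>
            ∃ c₁ : H.ConnectedComponent, IsLargestComp H c₁ ∧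
              ε * Fintype.card V <
                (((V2set H R) ∆
                    (Finset.univ.filter (· ∈ (twoCoreComp H c₁).support))).card : ℝ))
          ≤ Real.exp (-c * Fintype.card V) := by
  obtain ⟨R, hR, c, hc, h⟩ := exists_prob_E2set_sdiff_le hd hp hp1 (half_pos hε) hb
  have hp0 : 0 ≤ p := by
    have : (3 : ℝ) ≤ d := by exact_mod_cast hd
    exact (lt_trans (one_div_pos.2 (by linarith)) hp).le
  refine ⟨R, hR, c, hc, fun V _ _ G hG hgirth => ?_⟩
  have hgirth' : 2 * R < G.girth := by exact_mod_cast hgirth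
  have hcyc : ∀ H ≤ G, NoShortCycle H (2 * R) :=
    fun H hH => (noShortCycle_of_lt_girth hgirth').mono hH
  have h0 : (0 : ℝ) ≤ Fintype.card V := Nat.cast_nonneg _
  refine ⟨(percProb_mono hp0 hp1.le ?_).trans (h V G hG hgirth'),
    (percProb_mono hp0 hp1.le ?_).trans (h V G hG hgirth')⟩
  · rintro H hH ⟨c₁, hc₁, hlt⟩
    refine ⟨c₁, hc₁, ?_⟩
    rw [symmDiff_def, Finset.sup_eq_union, Finset.sdiff_eq_empty_iff_subset.2
      (edgeFinset'_twoCoreComp_subset (hcyc H hH) hR (by omega) c₁), Finset.union_empty] at hlt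
    nlinarith
  · rintro H hH ⟨c₁, hc₁, hlt⟩
    refine ⟨c₁, hc₁, ?_⟩
    have h1 := card_symmDiff_twoCoreComp_support_le (hcyc H hH) hR (by omega) c₁
    have h2 := hlt.trans_le (Nat.cast_le.2 h1)
    push_cast at h2
    linarith

end Percolation

end
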